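/- Norm inflation with infinite loss of regularity at general initial data in H^s for gIBq: let k ≥ 2 be an integer, σ ∈ ℝ and s < 0, and let v₀, v₁ : ℝ → ℂ be measurable with ‖⟨ξ⟩^s v₀‖_{L²(ℝ)} < ∞ and ‖⟨ξ⟩^s v₁‖_{L²(ℝ)} < ∞. Then for every ε > 0 there exist T ∈ (0, ε), measurable functions w₀, w₁ ∈ L¹(ℝ) and a Fourier-side solution v of gIBq with nonlinearity u^k and data (w₀, w₁) on [0, T] such that ‖⟨ξ⟩^s (w₀ − v₀)‖_{L²(ℝ)} + ‖⟨ξ⟩^s (w₁ − v₁)‖_{L²(ℝ)} < ε and ‖⟨ξ⟩^σ v(T)‖_{L²(ℝ)} > ε⁻¹. -/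

import Mathlib

open MeasureTheory Filter
open scoped ENNReal

noncomputable section

/-- The Japanese bracket weight `⟨ξ⟩^s = (1+ξ²)^(s/2)`. -/
def jbw (s ξ : ℝ) : ℝ := (1 + ξ ^ 2) ^ (s / 2)

/-- `λ(ξ) = |ξ|/⟨ξ⟩`. -/
def lam (ξ : ℝ) : ℝ := |ξ| / (1 + ξ ^ 2) ^ ((1 : ℝ) / 2)

/-- The multiplier `m(t,ξ) = sin(tλ(ξ))/λ(ξ)` for `ξ ≠ 0`, `m(t,0) = t`. -/
def mker (t ξ : ℝ) : ℝ := if ξ = 0 then t else Real.sin (t * lam ξ) / lam ξ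

/-- Fourier side linear propagator `Ŝ(t)(v₀,v₁)`. -/
def Shat (t : ℝ) (v₀ v₁ : ℝ → ℂ) (ξ : ℝ) : ℂ :=
  (Real.cos (t * lam ξ) : ℂ) * v₀ ξ + (mker t ξ : ℂ) * v₁ ξ

/-- Convolution of complex valued functions on `ℝ`. -/
def conv (f g : ℝ → ℂ) (ξ : ℝ) : ℂ := ∫ η, f η * g (ξ - η)

/-- Iterated convolution of a list of functions. -/
def convList : List (ℝ → ℂ) → ℝ → ℂ
  | [] => fun _ => 0
  | [f] => f
  | f :: g :: fs => conv f (convList (g :: fs))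

/-- Fourier side Duhamel operator `Î_k`. -/
def Ihat (k : ℕ) (w : Fin k → ℝ → ℝ → ℂ) (t ξ : ℝ) : ℂ :=
  ∫ t' in (0:ℝ)..t,
    ((Real.sin ((t - t') * lam ξ) * lam ξ : ℝ) : ℂ) * convList (List.ofFn fun i => w i t') ξ

/-- Continuity of a curve of functions with respect to the `L¹` norm, on `[0,T]`. -/
def ContinuousL1On (T : ℝ) (v : ℝ → ℝ → ℂ) : Prop :=
  ∀ t₀ ∈ Set.Icc (0 : ℝ) T,
    Tendsto (fun t => eLpNorm (fun ξ => v t ξ - v t₀ ξ) 1 volume)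
      (nhdsWithin t₀ (Set.Icc (0 : ℝ) T)) (nhds 0)

/-- Fourier-side solution of the generalized improved Boussinesq equation with
nonlinearity `u^k` and data `(v₀, v₁)` on `[0, T]`. -/
def IsGIBqSol (k : ℕ) (T : ℝ) (v₀ v₁ : ℝ → ℂ) (v : ℝ → ℝ → ℂ) : Prop :=
  (∀ t ∈ Set.Icc (0 : ℝ) T, Integrable (v t)) ∧
  ContinuousL1On T v ∧
  ∀ t ∈ Set.Icc (0 : ℝ) T,
    ∀ᵐ ξ ∂volume, v t ξ = Shat t v₀ v₁ ξ + Ihat k (fun _ => v) t ξ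

/-- Picard iterates `Ξ̂_j` for gIBq on the Fourier side. -/
def Xi (k : ℕ) (v₀ v₁ : ℝ → ℂ) : ℕ → ℝ → ℝ → ℂ
  | 0 => fun t => Shat t v₀ v₁
  | (j+1) => fun t ξ =>
      ∑ p ∈ (Finset.Nat.antidiagonalTuple k j).attach,
        Ihat k (fun i => Xi k v₀ v₁ (p.1 i)) t ξ
decreasing_by
  have hsum := Finset.Nat.mem_antidiagonalTuple.mp p.2
  have hle : p.1 i ≤ j := by
    calc p.1 i ≤ ∑ i', p.1 i' :=
          Finset.single_le_sum (fun _ _ => Nat.zero_le _) (Finset.mem_univ i)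
      _ = j := hsum
  omega

/-- The `FL^{s,p}` norm on the Fourier side: `‖⟨ξ⟩^s w‖_{L^p}`. -/
def FLnorm (s : ℝ) (p : ℝ≥0∞) (w : ℝ → ℂ) : ℝ≥0∞ :=
  eLpNorm (fun ξ => jbw s ξ * ‖w ξ‖) p volume

end

/-!
Writing families of paths as elements of `L¹(ℝ; C([0, T]))`, the equation becomes
`V = S + P (V, …, V)` with `‖P‖ ≤ T²`. Approximate the data by integrable `φ₀, φ₁` and add to `φ₀`
a bump `f` of height `R` supported near the frequencies `N` and `-j N`, where `k = j + 1`. If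
`T² R^j` is a small constant and `R` is large, the equation is solvable in a small ball around the
path constantly equal to `f`, and on the window `[1, j + 2]`, which `f` avoids, the solution at time
`T` is dominated by the resonant interaction `P (f, …, f)`, of size `T² R^(j + 1) ~ R`. All this is
uniform in `N`, whereas `f` tends to `0` in `FL^{s,p}` as `N → ∞` because `s < 0`. Since the window
is bounded, every `FL^{σ,q}` norm of the solution detects the growth.
-/

section MultilinearEquation

variable {𝕜 E F H : Type*} [NontriviallyNormedField 𝕜] [NormedAddCommGroup E] [NormedSpace 𝕜 E]
  [NormedAddCommGroup F] [NormedSpace 𝕜 F] [NormedAddCommGroup H] [NormedSpace 𝕜 H] {n : ℕ}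

theorem norm_multilinear_diag_sub_le (P : E [×n]→L[𝕜] F) {V W : E} {r : ℝ} (hV : ‖V‖ ≤ r)
    (hW : ‖W‖ ≤ r) :
    ‖P (fun _ ↦ V) - P (fun _ ↦ W)‖ ≤ ‖P‖ * n * r ^ (n - 1) * ‖V - W‖ := by
  have hr : 0 ≤ r := (norm_nonneg V).trans hV
  calc ‖P (fun _ ↦ V) - P (fun _ ↦ W)‖
      ≤ ‖P‖ * n * max ‖fun _ : Fin n ↦ V‖ ‖fun _ : Fin n ↦ W‖ ^ (n - 1)
          * ‖(fun _ : Fin n ↦ V) - fun _ ↦ W‖ := by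
        simpa using P.norm_image_sub_le (fun _ ↦ V) fun _ ↦ W
    _ ≤ ‖P‖ * n * r ^ (n - 1) * ‖V - W‖ := by
        gcongr
        · exact max_le ((pi_norm_const_le V).trans hV) ((pi_norm_const_le W).trans hW)
        · exact pi_norm_const_le (V - W)

theorem exists_eq_add_multilinear_diag [CompleteSpace E] (P : E [×n]→L[𝕜] E) {S F : E} {r d : ℝ}
    (hd : 0 ≤ d) (hr : ‖F‖ + d ≤ r) (hmaps : ‖S - F‖ + ‖P‖ * r ^ n ≤ d)
    (hcontr : ‖P‖ * n * r ^ (n - 1) < 1) :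
    ∃ V ∈ Metric.closedBall F d, V = S + P fun _ ↦ V := by
  have hr₀ : 0 ≤ r := (add_nonneg (norm_nonneg F) hd).trans hr
  have norm_le {V : E} (hV : V ∈ Metric.closedBall F d) : ‖V‖ ≤ r :=
    (norm_le_norm_add_norm_sub' V F).trans
      ((add_le_add_right (mem_closedBall_iff_norm.1 hV) _).trans hr)
  let Φ : E → E := fun V ↦ S + P fun _ ↦ V
  have maps : Set.MapsTo Φ (Metric.closedBall F d) (Metric.closedBall F d) := fun V hV ↦ by
    rw [mem_closedBall_iff_norm]
    calc ‖Φ V - F‖ = ‖(S - F) + P fun _ ↦ V‖ := by simp only [Φ]; congr 1; abel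
      _ ≤ ‖S - F‖ + ‖P‖ * r ^ n := (norm_add_le _ _).trans <| by
        gcongr
        exact P.le_opNorm_mul_pow_of_le ((pi_norm_const_le V).trans (norm_le hV))
      _ ≤ d := hmaps
  have contracting : ContractingWith ⟨‖P‖ * n * r ^ (n - 1), by positivity⟩
      (maps.restrict Φ _ _) := by
    refine ⟨hcontr, LipschitzWith.of_dist_le_mul fun V W ↦ ?_⟩
    simp only [Subtype.dist_eq, Set.MapsTo.val_restrict_apply, dist_eq_norm, Φ,
      add_sub_add_left_eq_sub]
    exact norm_multilinear_diag_sub_le P (norm_le V.2) (norm_le W.2)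
  obtain ⟨V, hV, hfix, -⟩ := contracting.exists_fixedPoint' Metric.isClosed_closedBall.isComplete
    maps (Metric.mem_closedBall_self hd) (edist_ne_top _ _)
  exact ⟨V, hV, hfix.symm⟩

theorem norm_clm_multilinear_diag_le (P : E [×n]→L[𝕜] E) (ℓ : E →L[𝕜] H) {S F V : E} {r : ℝ}
    (hV : V = S + P fun _ ↦ V) (hVr : ‖V‖ ≤ r) (hFr : ‖F‖ ≤ r) :
    ‖ℓ (P fun _ ↦ F)‖ ≤ ‖ℓ V‖ + ‖ℓ S‖ + ‖ℓ‖ * (‖P‖ * n * r ^ (n - 1) * ‖V - F‖) := by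
  have hsplit : ℓ (P fun _ ↦ F) = ℓ V - ℓ S - ℓ ((P fun _ ↦ V) - P fun _ ↦ F) := by
    rw [← map_sub, ← map_sub]
    congr 1
    nth_rw 1 [hV]
    abel
  rw [hsplit]
  refine (norm_sub_le _ _).trans (add_le_add (norm_sub_le _ _) ?_)
  exact ℓ.le_opNorm_of_le (norm_multilinear_diag_sub_le P hVr hFr)

/-- The radius of the ball around an approximate solution of size `R` in which the equation
`V = S + P (V, …, V)` of degree `j + 1` is solved; the factor `20` is a safety margin. -/
noncomputable def contractionRadius (j : ℕ) (R : ℝ) : ℝ := R / (20 * (j + 1) * 3 ^ j)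

theorem contractionRadius_nonneg (j : ℕ) {R : ℝ} (hR : 0 ≤ R) : 0 ≤ contractionRadius j R := by
  unfold contractionRadius
  positivity

theorem mul_contractionRadius (j : ℕ) (R : ℝ) :
    (j + 1) * 3 ^ j * contractionRadius j R = R / 20 := by
  unfold contractionRadius
  field_simp

theorem contractionRadius_le (j : ℕ) {R : ℝ} (hR : 0 ≤ R) : contractionRadius j R ≤ R / 20 := by
  have one_le : 1 ≤ (j + 1 : ℝ) * 3 ^ j :=
    one_le_mul_of_one_le_of_one_le (by simp) (one_le_pow₀ (by norm_num))
  exact (le_mul_of_one_le_left (contractionRadius_nonneg j hR) one_le).trans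
    (mul_contractionRadius j R).le

theorem add_le_contractionRadius {j : ℕ} {R M τ : ℝ} (hR : 1 ≤ R) (hτ₀ : 0 ≤ τ)
    (hM : 40 * (j + 1) * 3 ^ j * M ≤ R) (hτ : 200 * (j + 1) * 9 ^ j * (τ * R ^ j) ≤ 1) :
    M + 2 * τ * R + τ * (3 * R) ^ (j + 1) ≤ contractionRadius j R := by
  have hMd : M ≤ contractionRadius j R / 2 := by
    rw [contractionRadius, div_div, le_div_iff₀ (by positivity)]
    linarith
  have hτ_le : τ ≤ τ * (3 * R) ^ j := le_mul_of_one_le_right hτ₀ (one_le_pow₀ (by linarith))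
  have hτd : 2 * τ * R + τ * (3 * R) ^ (j + 1) ≤ contractionRadius j R / 2 := by
    calc 2 * τ * R + τ * (3 * R) ^ (j + 1)
        ≤ 2 * (τ * (3 * R) ^ j) * R + τ * (3 * R) ^ (j + 1) := by gcongr
      _ = 5 * R * (τ * (3 * R) ^ j) := by ring
      _ ≤ contractionRadius j R / 2 := by
        rw [contractionRadius, div_div, le_div_iff₀ (by positivity)]
        calc 5 * R * (τ * (3 * R) ^ j) * (20 * (j + 1) * 3 ^ j * 2)
            = R * (200 * (j + 1) * 9 ^ j * (τ * R ^ j)) := by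
              rw [show (9 : ℝ) = 3 * 3 by norm_num, mul_pow, mul_pow]; ring
          _ ≤ R := mul_le_of_le_one_right (by linarith) hτ
  linarith

theorem exists_eq_add_multilinear_diag_norm_clm_ge [CompleteSpace E] {j : ℕ}
    (P : E [×(j + 1)]→L[𝕜] E) (ℓ : E →L[𝕜] H) {S F : E} {R M τ : ℝ} (hR : 1 ≤ R)
    (hP : ‖P‖ ≤ τ) (hℓ : ‖ℓ‖ ≤ 1) (hF : ‖F‖ ≤ 2 * R) (hSF : ‖S - F‖ ≤ M + 2 * τ * R)
    (hM : 40 * (j + 1) * 3 ^ j * M ≤ R) (hτ : 200 * (j + 1) * 9 ^ j * (τ * R ^ j) ≤ 1) :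
    ∃ V, V = S + P (fun _ ↦ V) ∧ ‖ℓ (P fun _ ↦ F)‖ ≤ ‖ℓ V‖ + ‖ℓ S‖ + τ * R ^ (j + 1) / 20 := by
  have hτ₀ : 0 ≤ τ := (norm_nonneg P).trans hP
  set d := contractionRadius j R
  have hd₀ : 0 ≤ d := contractionRadius_nonneg j (by linarith)
  have hdR : d ≤ R / 20 := contractionRadius_le j (by linarith)
  have hmaps : ‖S - F‖ + ‖P‖ * (3 * R) ^ (j + 1) ≤ d :=
    (add_le_add hSF (by gcongr)).trans (add_le_contractionRadius hR hτ₀ hM hτ)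
  have hlip : ‖P‖ * (j + 1 : ℕ) * (3 * R) ^ j ≤ (j + 1) * 3 ^ j * (τ * R ^ j) := by
    calc ‖P‖ * (j + 1 : ℕ) * (3 * R) ^ j ≤ τ * (j + 1 : ℕ) * (3 * R) ^ j := by gcongr
      _ = (j + 1) * 3 ^ j * (τ * R ^ j) := by push_cast; ring
  have hcontr : ‖P‖ * (j + 1 : ℕ) * (3 * R) ^ j < 1 := by
    have : (j + 1) * 3 ^ j * (τ * R ^ j) ≤ (j + 1) * 9 ^ j * (τ * R ^ j) := by
      gcongr
      norm_num
    linarith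
  obtain ⟨V, hVF, hV⟩ := exists_eq_add_multilinear_diag P hd₀ (by linarith) hmaps hcontr
  rw [mem_closedBall_iff_norm] at hVF
  have hVr : ‖V‖ ≤ 3 * R := by linarith [norm_le_norm_add_norm_sub' V F]
  refine ⟨V, hV, (norm_clm_multilinear_diag_le P ℓ hV hVr (hF.trans (by linarith))).trans ?_⟩
  gcongr
  calc ‖ℓ‖ * (‖P‖ * (j + 1 : ℕ) * (3 * R) ^ j * ‖V - F‖)
      ≤ 1 * ((j + 1) * 3 ^ j * (τ * R ^ j) * d) := by gcongr
    _ = τ * R ^ j * ((j + 1) * 3 ^ j * d) := by ring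
    _ = τ * R ^ (j + 1) / 20 := by rw [mul_contractionRadius]; ring

end MultilinearEquation

section IteratedBilin

variable {𝕜 E : Type*} [NontriviallyNormedField 𝕜] [NormedAddCommGroup E] [NormedSpace 𝕜 E]

/-- The product `B (w 0) (B (w 1) ( … (w j)))` of `j + 1` factors, associated to the right, as a
continuous multilinear map. -/
noncomputable def iteratedBilin (B : E →L[𝕜] E →L[𝕜] E) : (j : ℕ) → E [×(j + 1)]→L[𝕜] E
  | 0 => (ContinuousMultilinearMap.ofSubsingleton 𝕜 E E (0 : Fin 1) (.id 𝕜 E) : E [×1]→L[𝕜] E)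
  | j + 1 => (((ContinuousLinearMap.compContinuousMultilinearMapL 𝕜 (fun _ ↦ E) E E).flip
      (iteratedBilin B j)).comp B).uncurryLeft

theorem iteratedBilin_zero (B : E →L[𝕜] E →L[𝕜] E) (w : Fin 1 → E) :
    iteratedBilin B 0 w = w 0 := rfl

theorem iteratedBilin_succ (B : E →L[𝕜] E →L[𝕜] E) (j : ℕ) (w : Fin (j + 2) → E) :
    iteratedBilin B (j + 1) w = B (w 0) (iteratedBilin B j (Fin.tail w)) := rfl

theorem norm_iteratedBilin_le (B : E →L[𝕜] E →L[𝕜] E) (j : ℕ) : ‖iteratedBilin B j‖ ≤ ‖B‖ ^ j := by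
  induction j with
  | zero =>
    refine ContinuousMultilinearMap.opNorm_le_bound (by simp) fun w ↦ ?_
    simp [iteratedBilin_zero]
  | succ j ih =>
    refine ContinuousMultilinearMap.opNorm_le_bound (by positivity) fun w ↦ ?_
    rw [iteratedBilin_succ, Fin.prod_univ_succ, pow_succ', mul_mul_mul_comm]
    refine (B.le_opNorm₂ _ _).trans ?_
    gcongr
    exact ContinuousMultilinearMap.le_of_opNorm_le ih _

theorem map_iteratedBilin {E' : Type*} [NormedAddCommGroup E'] [NormedSpace 𝕜 E']
    {B : E →L[𝕜] E →L[𝕜] E} {B' : E' →L[𝕜] E' →L[𝕜] E'} {φ : E → E'}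
    (hφ : ∀ x y, φ (B x y) = B' (φ x) (φ y)) (j : ℕ) (w : Fin (j + 1) → E) :
    φ (iteratedBilin B j w) = iteratedBilin B' j (φ ∘ w) := by
  induction j with
  | zero => rfl
  | succ j ih => rw [iteratedBilin_succ, iteratedBilin_succ, hφ, ih]; rfl

end IteratedBilin

section Convolution

open scoped Convolution

variable {𝕜 G E E' F : Type*} [NontriviallyNormedField 𝕜] [NormedAddCommGroup E] [NormedSpace 𝕜 E]
  [NormedAddCommGroup E'] [NormedSpace 𝕜 E'] [NormedAddCommGroup F] [NormedSpace 𝕜 F]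
  [NormedSpace ℝ F] [MeasurableSpace G] [AddGroup G] [MeasurableAdd₂ G]
  [MeasurableNeg G] {μ : Measure G} [SFinite μ] [μ.IsAddRightInvariant]

theorem integral_norm_convolution_le (L : E →L[𝕜] E' →L[𝕜] F) {f : G → E} {g : G → E'}
    (hf : Integrable f μ) (hg : Integrable g μ) :
    ∫ x, ‖(f ⋆[L, μ] g) x‖ ∂μ ≤ ‖L‖ * (∫ x, ‖f x‖ ∂μ) * ∫ x, ‖g x‖ ∂μ := by
  have hnorm : ∫ x, ((fun x ↦ ‖f x‖) ⋆[.mul ℝ ℝ, μ] fun x ↦ ‖g x‖) x ∂μ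
      = (∫ x, ‖f x‖ ∂μ) * ∫ x, ‖g x‖ ∂μ := integral_convolution _ hf.norm hg.norm
  rw [mul_assoc, ← hnorm, ← integral_const_mul]
  refine integral_mono_ae (hf.integrable_convolution L hg).norm
    ((hf.norm.integrable_convolution _ hg.norm).const_mul _) ?_
  filter_upwards [hf.norm.ae_convolution_exists (.mul ℝ ℝ) hg.norm] with x hx
  simp only [convolution_def, ← integral_const_mul]
  refine norm_integral_le_of_norm_le (hx.const_mul _) (.of_forall fun y ↦ ?_)
  simpa only [ContinuousLinearMap.mul_apply', mul_assoc] using L.le_opNorm₂ (f y) (g (x - y))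

variable [SMulCommClass ℝ 𝕜 F]

/-- Convolution as a continuous bilinear map on `L¹`. -/
noncomputable def convolutionL1 (μ : Measure G) [SFinite μ] [μ.IsAddRightInvariant]
    (L : E →L[𝕜] E' →L[𝕜] F) : (G →₁[μ] E) →L[𝕜] (G →₁[μ] E') →L[𝕜] (G →₁[μ] F) :=
  LinearMap.mkContinuous₂
    (LinearMap.mk₂ 𝕜
      (fun f g ↦ ((L1.integrable_coeFn f).integrable_convolution L (L1.integrable_coeFn g)).toL1 _)
      (fun f f' g ↦ by
        rw [← Integrable.toL1_add, Integrable.toL1_eq_toL1_iff,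
          convolution_congr L (Lp.coeFn_add f f') .rfl]
        filter_upwards [(L1.integrable_coeFn f).ae_convolution_exists L (L1.integrable_coeFn g),
          (L1.integrable_coeFn f').ae_convolution_exists L (L1.integrable_coeFn g)] with x h h'
        exact h.add_distrib h')
      (fun c f g ↦ by
        rw [← Integrable.toL1_smul', Integrable.toL1_eq_toL1_iff,
          convolution_congr L (Lp.coeFn_smul c f) .rfl, smul_convolution])
      (fun f g g' ↦ by
        rw [← Integrable.toL1_add, Integrable.toL1_eq_toL1_iff,
          convolution_congr L .rfl (Lp.coeFn_add g g')]
        filter_upwards [(L1.integrable_coeFn f).ae_convolution_exists L (L1.integrable_coeFn g),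
          (L1.integrable_coeFn f).ae_convolution_exists L (L1.integrable_coeFn g')] with x h h'
        exact h.distrib_add h')
      (fun c f g ↦ by
        rw [← Integrable.toL1_smul', Integrable.toL1_eq_toL1_iff,
          convolution_congr L .rfl (Lp.coeFn_smul c g), convolution_smul]))
    ‖L‖ fun f g ↦ by
      rw [LinearMap.mk₂_apply, L1.norm_of_fun_eq_integral_norm, L1.norm_eq_integral_norm,
        L1.norm_eq_integral_norm]
      exact integral_norm_convolution_le L (L1.integrable_coeFn f) (L1.integrable_coeFn g)

theorem coeFn_convolutionL1 (L : E →L[𝕜] E' →L[𝕜] F) (f : G →₁[μ] E) (g : G →₁[μ] E') :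
    convolutionL1 μ L f g =ᵐ[μ] f ⋆[L, μ] g :=
  ((L1.integrable_coeFn f).integrable_convolution L (L1.integrable_coeFn g)).coeFn_toL1

theorem norm_convolutionL1_le (L : E →L[𝕜] E' →L[𝕜] F) : ‖convolutionL1 μ L‖ ≤ ‖L‖ :=
  LinearMap.mkContinuous₂_norm_le _ (norm_nonneg L) _

end Convolution

section ConvolutionMap

open scoped Convolution

variable {𝕜 G E E' F E₁ E₁' F₁ : Type*} [RCLike 𝕜] [NormedAddCommGroup E] [NormedSpace 𝕜 E]
  [NormedAddCommGroup E'] [NormedSpace 𝕜 E'] [NormedAddCommGroup F] [NormedSpace 𝕜 F]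
  [NormedSpace ℝ F] [CompleteSpace F] [NormedAddCommGroup E₁] [NormedSpace 𝕜 E₁]
  [NormedAddCommGroup E₁'] [NormedSpace 𝕜 E₁'] [NormedAddCommGroup F₁] [NormedSpace 𝕜 F₁]
  [NormedSpace ℝ F₁] [CompleteSpace F₁] [MeasurableSpace G] [AddGroup G] {μ : Measure G}
  {L : E →L[𝕜] E' →L[𝕜] F} {L₁ : E₁ →L[𝕜] E₁' →L[𝕜] F₁} {φ : F →L[𝕜] F₁}

theorem clm_convolution_apply {α : E → E₁} {β : E' → E₁'}
    (hφ : ∀ x y, φ (L x y) = L₁ (α x) (β y)) {f : G → E} {g : G → E'} {x : G}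
    (h : ConvolutionExistsAt f g x L μ) :
    φ ((f ⋆[L, μ] g) x) = ((α ∘ f) ⋆[L₁, μ] (β ∘ g)) x := by
  simp only [convolution_def, ← φ.integral_comp_comm h, hφ, Function.comp_apply]

variable [MeasurableAdd₂ G] [MeasurableNeg G] [SFinite μ] [μ.IsAddRightInvariant]

theorem compLp_convolutionL1 {α : E →L[𝕜] E₁} {β : E' →L[𝕜] E₁'}
    (hφ : ∀ x y, φ (L x y) = L₁ (α x) (β y)) (f : G →₁[μ] E) (g : G →₁[μ] E') :
    φ.compLp (convolutionL1 μ L f g) = convolutionL1 μ L₁ (α.compLp f) (β.compLp g) := by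
  refine Lp.ext ?_
  filter_upwards [φ.coeFn_compLp (convolutionL1 μ L f g), coeFn_convolutionL1 L f g,
    coeFn_convolutionL1 L₁ (α.compLp f) (β.compLp g),
    (L1.integrable_coeFn f).ae_convolution_exists L (L1.integrable_coeFn g)] with x h₁ h₂ h₃ h
  rw [h₁, h₂, h₃, clm_convolution_apply hφ h,
    convolution_congr L₁ (α.coeFn_compLp' f) (β.coeFn_compLp' g)]
  rfl

end ConvolutionMap

section ConvolutionProd

variable {G A : Type*} [NormedRing A] [NormedAlgebra ℝ A] [MeasurableSpace G] [AddGroup G]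
  [MeasurableAdd₂ G] [MeasurableNeg G] {μ : Measure G} [SFinite μ] [μ.IsAddRightInvariant]

/-- The convolution product of `j + 1` integrable functions with values in a normed algebra,
associated to the right as in `convList`. -/
noncomputable def convolutionProd (μ : Measure G) [SFinite μ] [μ.IsAddRightInvariant] (A : Type*)
    [NormedRing A] [NormedAlgebra ℝ A] (j : ℕ) : (G →₁[μ] A) [×(j + 1)]→L[ℝ] (G →₁[μ] A) :=
  iteratedBilin (convolutionL1 μ (.mul ℝ A)) j

theorem convolutionProd_zero (w : Fin 1 → G →₁[μ] A) : convolutionProd μ A 0 w = w 0 := rfl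

theorem convolutionProd_succ (j : ℕ) (w : Fin (j + 2) → G →₁[μ] A) :
    convolutionProd μ A (j + 1) w
      = convolutionL1 μ (.mul ℝ A) (w 0) (convolutionProd μ A j (Fin.tail w)) := rfl

theorem norm_convolutionProd_le (j : ℕ) : ‖convolutionProd μ A j‖ ≤ 1 :=
  (norm_iteratedBilin_le _ j).trans <| pow_le_one₀ (ContinuousLinearMap.opNorm_nonneg _) <|
    (norm_convolutionL1_le _).trans (ContinuousLinearMap.opNorm_mul_le ℝ A)

end ConvolutionProd

section ConvList

open scoped Convolution

variable {K : Type*} [TopologicalSpace K] [CompactSpace K]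

theorem convList_ofFn_succ {j : ℕ} (w : Fin (j + 2) → ℝ → ℂ) :
    convList (List.ofFn w) = w 0 ⋆[.mul ℝ ℂ, volume] convList (List.ofFn (Fin.tail w)) := by
  simp only [List.ofFn_succ]
  rfl

theorem ae_convolutionProd_apply (j : ℕ) (w : Fin (j + 1) → ℝ →₁[volume] C(K, ℂ)) :
    ∀ᵐ ξ, ∀ t : K, convolutionProd volume C(K, ℂ) j w ξ t
      = convList (List.ofFn fun i ξ ↦ w i ξ t) ξ := by
  induction j with
  | zero => exact .of_forall fun ξ t ↦ by simp [convolutionProd_zero, convList]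
  | succ j ih =>
    set G := convolutionProd volume C(K, ℂ) j (Fin.tail w)
    filter_upwards [coeFn_convolutionL1 (.mul ℝ C(K, ℂ)) (w 0) G,
      (L1.integrable_coeFn (w 0)).ae_convolution_exists (.mul ℝ C(K, ℂ)) (L1.integrable_coeFn G)]
      with ξ hξ hex t
    have heval := clm_convolution_apply (φ := ContinuousMap.evalCLM ℝ t) (L₁ := .mul ℝ ℂ)
      (α := fun g ↦ g t) (β := fun g ↦ g t) (fun _ _ ↦ rfl) hex
    rw [convolutionProd_succ, hξ, convList_ofFn_succ]
    refine heval.trans (congr_fun (convolution_congr _ .rfl ?_) ξ)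
    filter_upwards [ih (Fin.tail w)] with η hη using hη t

end ConvList

section Holder

variable {𝕜 X E F G : Type*} [NontriviallyNormedField 𝕜] [NormedAddCommGroup E] [NormedSpace 𝕜 E]
  [NormedAddCommGroup F] [NormedSpace 𝕜 F] [NormedAddCommGroup G] [NormedSpace 𝕜 G]
  [MeasurableSpace X] {μ : Measure X} {B : E →L[𝕜] F →L[𝕜] G} {b c : ℝ} {a : Lp E ∞ μ}

theorem norm_holder_top_one_le (hB : ‖B‖ ≤ b) (ha : ‖a‖ ≤ c) (f : X →₁[μ] F) :
    ‖B.holder 1 a f‖ ≤ b * c * ‖f‖ := by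
  refine (B.norm_holder_apply_apply_le a f).trans ?_
  have := (norm_nonneg B).trans hB
  gcongr

theorem norm_holderL_top_one_le (hB : ‖B‖ ≤ b) (ha : ‖a‖ ≤ c) :
    ‖B.holderL μ ∞ 1 1 a‖ ≤ b * c :=
  ContinuousLinearMap.opNorm_le_bound _
    (mul_nonneg ((norm_nonneg B).trans hB) ((norm_nonneg a).trans ha))
    (norm_holder_top_one_le hB ha)

end Holder

section Path

variable {K E : Type*} [TopologicalSpace K] [CompactSpace K] [NormedAddCommGroup E]
  [NormedSpace ℝ E]

/-- The bilinear map sending a scalar path `κ` and a vector `z` to the path `t ↦ κ t • z`. -/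
noncomputable def pathSMulConst : C(K, ℝ) →L[ℝ] E →L[ℝ] C(K, E) :=
  LinearMap.mkContinuous₂
    (LinearMap.mk₂ ℝ (fun κ z ↦ ⟨fun t ↦ κ t • z, by fun_prop⟩)
      (fun κ κ' z ↦ ContinuousMap.ext fun t ↦ add_smul (κ t) (κ' t) z)
      (fun c κ z ↦ ContinuousMap.ext fun t ↦ mul_smul c (κ t) z)
      (fun κ z z' ↦ ContinuousMap.ext fun t ↦ smul_add (κ t) z z')
      (fun c κ z ↦ ContinuousMap.ext fun t ↦ smul_comm (κ t) c z))
    1 fun κ z ↦ by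
      refine (ContinuousMap.norm_le _ (by positivity)).2 fun t ↦ ?_
      rw [one_mul]
      exact (norm_smul_le _ _).trans (by gcongr; exact κ.norm_coe_le_norm t)

theorem pathSMulConst_apply (κ : C(K, ℝ)) (z : E) (t : K) : pathSMulConst κ z t = κ t • z := rfl

theorem norm_pathSMulConst_le : ‖(pathSMulConst : C(K, ℝ) →L[ℝ] E →L[ℝ] C(K, E))‖ ≤ 1 :=
  LinearMap.mkContinuous₂_norm_le _ zero_le_one _

variable {T : ℝ}

theorem continuous_volterraIntegrand (hT : 0 ≤ T) (κ : C(Set.Icc 0 T, ℝ)) (g : C(Set.Icc 0 T, E)) :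
    Continuous fun p : ℝ × ℝ ↦ Set.IccExtend hT κ (p.1 - p.2) • Set.IccExtend hT g p.2 := by
  fun_prop

theorem intervalIntegrable_volterraIntegrand (hT : 0 ≤ T) (κ : C(Set.Icc 0 T, ℝ))
    (g : C(Set.Icc 0 T, E)) (t : ℝ) :
    IntervalIntegrable (fun t' ↦ Set.IccExtend hT κ (t - t') • Set.IccExtend hT g t') volume 0 t :=
  ((continuous_volterraIntegrand hT κ g).comp (by fun_prop : Continuous fun t' ↦ (t, t'))
    ).intervalIntegrable 0 t

/-- The bilinear map sending a kernel `κ` and a path `g` on `[0, T]` to the path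
`t ↦ ∫₀ᵗ κ(t - t') g(t') dt'`. Both arguments are extended to `ℝ` as constants off `[0, T]`. -/
noncomputable def volterra (hT : 0 ≤ T) :
    C(Set.Icc 0 T, ℝ) →L[ℝ] C(Set.Icc 0 T, E) →L[ℝ] C(Set.Icc 0 T, E) :=
  LinearMap.mkContinuous₂
    (LinearMap.mk₂ ℝ
      (fun κ g ↦ ⟨fun t ↦ ∫ t' in (0 : ℝ)..t, Set.IccExtend hT κ (t - t') • Set.IccExtend hT g t',
        intervalIntegral.continuous_parametric_intervalIntegral_of_continuous
          (f := fun (t : Set.Icc 0 T) t' ↦ Set.IccExtend hT κ (t - t') • Set.IccExtend hT g t')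
          ((continuous_volterraIntegrand hT κ g).comp
            (continuous_subtype_val.prodMap continuous_id))
          continuous_subtype_val⟩)
      (fun κ κ' g ↦ ContinuousMap.ext fun t ↦
        (intervalIntegral.integral_congr fun _ _ ↦ add_smul _ _ _).trans
          (intervalIntegral.integral_add (intervalIntegrable_volterraIntegrand hT κ g t)
            (intervalIntegrable_volterraIntegrand hT κ' g t)))
      (fun c κ g ↦ ContinuousMap.ext fun t ↦
        (intervalIntegral.integral_congr fun _ _ ↦ mul_smul c _ _).trans
          (intervalIntegral.integral_smul c _))
      (fun κ g g' ↦ ContinuousMap.ext fun t ↦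
        (intervalIntegral.integral_congr fun _ _ ↦ smul_add _ _ _).trans
          (intervalIntegral.integral_add (intervalIntegrable_volterraIntegrand hT κ g t)
            (intervalIntegrable_volterraIntegrand hT κ g' t)))
      (fun c κ g ↦ ContinuousMap.ext fun t ↦
        (intervalIntegral.integral_congr fun _ _ ↦ smul_comm _ c _).trans
          (intervalIntegral.integral_smul c _)))
    T fun κ g ↦ by
      refine (ContinuousMap.norm_le _ (by positivity)).2 fun t ↦ ?_
      refine (intervalIntegral.norm_integral_le_of_norm_le_const (C := ‖κ‖ * ‖g‖) fun t' _ ↦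
        (norm_smul_le _ _).trans ?_).trans ?_
      · gcongr
        exacts [κ.norm_coe_le_norm _, g.norm_coe_le_norm _]
      · rw [sub_zero, abs_of_nonneg t.2.1, mul_comm, mul_assoc]
        gcongr
        exact t.2.2

theorem volterra_apply (hT : 0 ≤ T) (κ : C(Set.Icc 0 T, ℝ)) (g : C(Set.Icc 0 T, E))
    (t : Set.Icc 0 T) : volterra hT κ g t
      = ∫ t' in (0 : ℝ)..t, Set.IccExtend hT κ (t - t') • Set.IccExtend hT g t' := rfl

set_option maxSynthPendingDepth 3 in
theorem norm_volterra_le (hT : 0 ≤ T) :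
    ‖volterra (E := E) hT‖ ≤ T :=
  LinearMap.mkContinuous₂_norm_le _ hT _

end Path

section Dispersion

theorem lam_eq_abs_div_sqrt (ξ : ℝ) : lam ξ = |ξ| / √(1 + ξ ^ 2) := by
  rw [lam, Real.sqrt_eq_rpow]

theorem lam_nonneg (ξ : ℝ) : 0 ≤ lam ξ := by
  rw [lam_eq_abs_div_sqrt]
  positivity

theorem lam_le_one (ξ : ℝ) : lam ξ ≤ 1 := by
  rw [lam_eq_abs_div_sqrt]
  exact div_le_one_of_le₀ (Real.abs_le_sqrt (by linarith)) (Real.sqrt_nonneg _)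

theorem lam_eq_zero_iff {ξ : ℝ} : lam ξ = 0 ↔ ξ = 0 := by
  rw [lam_eq_abs_div_sqrt, div_eq_zero_iff, abs_eq_zero, or_iff_left (by positivity)]

@[fun_prop]
theorem continuous_lam : Continuous lam := by
  simp only [funext lam_eq_abs_div_sqrt]
  exact Continuous.div (by fun_prop) (by fun_prop) fun ξ ↦ by positivity

theorem mker_eq_mul_sinc (t ξ : ℝ) : mker t ξ = t * Real.sinc (t * lam ξ) := by
  unfold mker
  split_ifs with hξ
  · simp [lam_eq_zero_iff.2 hξ]
  · rcases eq_or_ne t 0 with rfl | ht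
    · simp
    · have := lam_eq_zero_iff.not.2 hξ
      rw [Real.sinc_of_ne_zero (mul_ne_zero ht this)]
      field_simp

theorem sq_div_ten_le_one_sub_cos {T ξ : ℝ} (hT : 0 ≤ T) (hT1 : T ≤ 1) (hξ : 1 ≤ ξ) :
    T ^ 2 / 10 ≤ 1 - Real.cos (T * lam ξ) := by
  have half_le : 1 / 2 ≤ lam ξ ^ 2 := by
    rw [lam_eq_abs_div_sqrt, div_pow, sq_abs, Real.sq_sqrt (by positivity),
      div_le_div_iff₀ (by norm_num) (by positivity)]
    nlinarith
  have hpi : 1 / 5 ≤ 2 / Real.pi ^ 2 := by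
    rw [div_le_div_iff₀ (by norm_num) (by positivity)]
    nlinarith [Real.pi_lt_d2, Real.pi_pos]
  have hcos := Real.cos_le_one_sub_mul_cos_sq (x := T * lam ξ) <| by
    rw [abs_of_nonneg (mul_nonneg hT (lam_nonneg ξ))]
    exact (mul_le_one₀ hT1 (lam_nonneg ξ) (lam_le_one ξ)).trans (by linarith [Real.pi_gt_three])
  calc T ^ 2 / 10 = 1 / 5 * (T ^ 2 * (1 / 2)) := by ring
    _ ≤ 2 / Real.pi ^ 2 * (T ^ 2 * lam ξ ^ 2) := by gcongr
    _ ≤ 1 - Real.cos (T * lam ξ) := by rw [← mul_pow]; linarith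

end Dispersion

section Symbols

open scoped BoundedContinuousFunction

section PathSymbol

variable {X K : Type*} [TopologicalSpace X] [TopologicalSpace K] [CompactSpace K]

theorem norm_curry_apply_le (m : (X × K) →ᵇ ℝ) (x : X) : ‖m.toContinuousMap.curry x‖ ≤ ‖m‖ :=
  (ContinuousMap.norm_le _ (norm_nonneg m)).2 fun t ↦ m.norm_coe_le_norm (x, t)

variable [SecondCountableTopology X] [MeasurableSpace X] [OpensMeasurableSpace X] {μ : Measure X}

/-- A bounded continuous kernel `m(ξ, t)` as an essentially bounded function of `ξ` with values in
the scalar paths. -/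
noncomputable def pathSymbol (μ : Measure X) (m : (X × K) →ᵇ ℝ) : Lp C(K, ℝ) ∞ μ :=
  (memLp_top_of_bound m.toContinuousMap.curry.continuous.aestronglyMeasurable ‖m‖
    (.of_forall (norm_curry_apply_le m))).toLp m.toContinuousMap.curry

theorem coeFn_pathSymbol (m : (X × K) →ᵇ ℝ) : pathSymbol μ m =ᵐ[μ] m.toContinuousMap.curry :=
  MemLp.coeFn_toLp _

theorem pathSymbol_add (m m' : (X × K) →ᵇ ℝ) :
    pathSymbol μ (m + m') = pathSymbol μ m + pathSymbol μ m' := rfl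

theorem norm_pathSymbol_le (m : (X × K) →ᵇ ℝ) : ‖pathSymbol μ m‖ ≤ ‖m‖ := by
  rw [pathSymbol, Lp.norm_toLp, eLpNorm_exponent_top]
  exact ENNReal.toReal_le_of_le_ofReal (norm_nonneg m)
    (eLpNormEssSup_le_of_ae_bound (.of_forall (norm_curry_apply_le m)))

theorem norm_pathSMulConst_pathSymbol_le {E : Type*} [NormedAddCommGroup E] [NormedSpace ℝ E]
    (m : (X × K) →ᵇ ℝ) (φ : X →₁[μ] E) :
    ‖pathSMulConst.holder 1 (pathSymbol μ m) φ‖ ≤ ‖m‖ * ‖φ‖ := by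
  rw [← one_mul ‖m‖]
  exact norm_holder_top_one_le (norm_pathSMulConst_le (K := K) (E := E)) (norm_pathSymbol_le m) φ

end PathSymbol

variable {T : ℝ}

/-- The kernel `cos(tλ(ξ))`. -/
noncomputable def cosKernel (T : ℝ) : (ℝ × Set.Icc 0 T) →ᵇ ℝ :=
  .ofNormedAddCommGroup (fun p ↦ Real.cos (p.2 * lam p.1)) (by fun_prop) 1
    fun p ↦ Real.abs_cos_le_one _

/-- The kernel `m(t, ξ)`, written with `sinc` so that it is visibly continuous at `ξ = 0`. -/
noncomputable def mKernel (T : ℝ) : (ℝ × Set.Icc 0 T) →ᵇ ℝ :=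
  .ofNormedAddCommGroup (fun p ↦ p.2 * Real.sinc (p.2 * lam p.1)) (by fun_prop) T
    fun p ↦ by
      rw [norm_mul, Real.norm_of_nonneg p.2.2.1]
      exact (mul_le_of_le_one_right p.2.2.1 (Real.abs_sinc_le_one _)).trans p.2.2.2

/-- The kernel `sin(tλ(ξ))λ(ξ)` of the Duhamel operator. -/
noncomputable def duhamelKernel (T : ℝ) : (ℝ × Set.Icc 0 T) →ᵇ ℝ :=
  .ofNormedAddCommGroup (fun p ↦ Real.sin (p.2 * lam p.1) * lam p.1) (by fun_prop) T
    fun p ↦ by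
      rw [norm_mul, Real.norm_of_nonneg (lam_nonneg _)]
      calc |Real.sin (p.2 * lam p.1)| * lam p.1 ≤ |p.2 * lam p.1| * 1 := by
            exact mul_le_mul Real.abs_sin_le_abs (lam_le_one _) (lam_nonneg _) (abs_nonneg _)
        _ ≤ p.2 := by
            rw [mul_one, abs_of_nonneg (mul_nonneg p.2.2.1 (lam_nonneg _))]
            exact mul_le_of_le_one_right p.2.2.1 (lam_le_one _)
        _ ≤ T := p.2.2.2

theorem norm_cosKernel_le : ‖cosKernel T‖ ≤ 1 :=
  BoundedContinuousFunction.norm_ofNormedAddCommGroup_le _ zero_le_one _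

theorem norm_mKernel_le (hT : 0 ≤ T) : ‖mKernel T‖ ≤ T :=
  BoundedContinuousFunction.norm_ofNormedAddCommGroup_le _ hT _

theorem norm_duhamelKernel_le (hT : 0 ≤ T) : ‖duhamelKernel T‖ ≤ T :=
  BoundedContinuousFunction.norm_ofNormedAddCommGroup_le _ hT _

theorem norm_cosKernel_sub_one_le : ‖cosKernel T - 1‖ ≤ T ^ 2 := by
  refine (BoundedContinuousFunction.norm_le (sq_nonneg T)).2 fun p ↦ ?_
  have hp : (p.2 * lam p.1 : ℝ) ≤ T :=
    (mul_le_of_le_one_right p.2.2.1 (lam_le_one _)).trans p.2.2.2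
  have hp0 : 0 ≤ (p.2 * lam p.1 : ℝ) := mul_nonneg p.2.2.1 (lam_nonneg _)
  have hcos := Real.one_sub_sq_div_two_le_cos (x := p.2 * lam p.1)
  have hcos' := Real.cos_le_one (p.2 * lam p.1)
  change |Real.cos (p.2 * lam p.1) - 1| ≤ T ^ 2
  rw [abs_le]
  constructor <;> nlinarith

end Symbols

section Picard

variable {T : ℝ}

/-- The linear evolution `t ↦ Ŝ(t)(φ₀, φ₁)` of integrable data, as an integrable family of paths
indexed by the frequency. -/
noncomputable def linearPath (T : ℝ) (φ₀ φ₁ : ℝ →₁[volume] ℂ) :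
    ℝ →₁[volume] C(Set.Icc 0 T, ℂ) :=
  pathSMulConst.holder 1 (pathSymbol volume (cosKernel T)) φ₀ +
    pathSMulConst.holder 1 (pathSymbol volume (mKernel T)) φ₁

theorem ae_linearPath_apply (φ₀ φ₁ : ℝ →₁[volume] ℂ) :
    ∀ᵐ ξ, ∀ t : Set.Icc 0 T, linearPath T φ₀ φ₁ ξ t = Shat t φ₀ φ₁ ξ := by
  filter_upwards [Lp.coeFn_add (pathSMulConst.holder 1 (pathSymbol volume (cosKernel T)) φ₀)
      (pathSMulConst.holder 1 (pathSymbol volume (mKernel T)) φ₁),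
    pathSMulConst.coeFn_holder (r := 1) (pathSymbol volume (cosKernel T)) φ₀,
    pathSMulConst.coeFn_holder (r := 1) (pathSymbol volume (mKernel T)) φ₁,
    coeFn_pathSymbol (μ := volume) (cosKernel T), coeFn_pathSymbol (μ := volume) (mKernel T)]
    with ξ h h₀ h₁ hcos hm t
  rw [linearPath, h, Pi.add_apply, h₀, h₁, hcos, hm, ContinuousMap.add_apply, pathSMulConst_apply,
    pathSMulConst_apply, Shat, mker_eq_mul_sinc, ← Complex.real_smul, ← Complex.real_smul]
  rfl

theorem norm_linearPath_le (hT : 0 ≤ T) (hT1 : T ≤ 1) (φ₀ φ₁ : ℝ →₁[volume] ℂ) :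
    ‖linearPath T φ₀ φ₁‖ ≤ ‖φ₀‖ + ‖φ₁‖ := by
  refine (norm_add_le _ _).trans (add_le_add ?_ ?_)
  · exact (norm_pathSMulConst_pathSymbol_le _ _).trans
      (mul_le_of_le_one_left (norm_nonneg _) norm_cosKernel_le)
  · exact (norm_pathSMulConst_pathSymbol_le _ _).trans
      (mul_le_of_le_one_left (norm_nonneg _) ((norm_mKernel_le hT).trans hT1))

/-- The linear Duhamel operator `G ↦ ∫₀ᵗ sin((t - t')λ) λ G(t') dt'` on integrable families of
paths. -/
noncomputable def duhamel (hT : 0 ≤ T) :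
    (ℝ →₁[volume] C(Set.Icc 0 T, ℂ)) →L[ℝ] (ℝ →₁[volume] C(Set.Icc 0 T, ℂ)) :=
  (volterra hT).holderL volume ∞ 1 1 (pathSymbol volume (duhamelKernel T))

theorem ae_duhamel_apply (hT : 0 ≤ T) (G : ℝ →₁[volume] C(Set.Icc 0 T, ℂ)) :
    ∀ᵐ ξ, ∀ t : Set.Icc 0 T, duhamel hT G ξ t = ∫ t' in (0 : ℝ)..t,
      ((Real.sin ((t - t') * lam ξ) * lam ξ : ℝ) : ℂ) * G ξ (Set.projIcc 0 T hT t') := by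
  filter_upwards [(volterra hT).coeFn_holder (r := 1) (pathSymbol volume (duhamelKernel T)) G,
    coeFn_pathSymbol (μ := volume) (duhamelKernel T)] with ξ h hm t
  rw [duhamel, ContinuousLinearMap.holderL_apply_apply, h, hm, volterra_apply]
  refine intervalIntegral.integral_congr fun t' ht' ↦ ?_
  rw [Set.uIcc_of_le t.2.1] at ht'
  have hsub : t - t' ∈ Set.Icc 0 T := ⟨sub_nonneg.2 ht'.2, by linarith [ht'.1, t.2.2]⟩
  simp only [Set.IccExtend_of_mem hT _ hsub, Complex.real_smul]
  rfl

theorem norm_duhamel_le (hT : 0 ≤ T) : ‖duhamel hT‖ ≤ T ^ 2 := by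
  rw [sq]
  exact norm_holderL_top_one_le (norm_volterra_le hT)
    ((norm_pathSymbol_le _).trans (norm_duhamelKernel_le hT))

/-- The nonlinearity `û ↦ Î_{j+1}(û, …, û)`, polarized to a multilinear map of integrable families
of paths. -/
noncomputable def gibqNonlinearity (hT : 0 ≤ T) (j : ℕ) :
    (ℝ →₁[volume] C(Set.Icc 0 T, ℂ)) [×(j + 1)]→L[ℝ] (ℝ →₁[volume] C(Set.Icc 0 T, ℂ)) :=
  (duhamel hT).compContinuousMultilinearMap
    (convolutionProd volume C(Set.Icc 0 T, ℂ) j)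

theorem norm_gibqNonlinearity_le (hT : 0 ≤ T) (j : ℕ) : ‖gibqNonlinearity hT j‖ ≤ T ^ 2 := by
  calc ‖gibqNonlinearity hT j‖ ≤ ‖duhamel hT‖ * ‖convolutionProd volume C(Set.Icc 0 T, ℂ) j‖ :=
        ContinuousLinearMap.norm_compContinuousMultilinearMap_le _ _
    _ ≤ T ^ 2 * 1 := by
        gcongr
        exacts [norm_duhamel_le hT, norm_convolutionProd_le j]
    _ = T ^ 2 := mul_one _

theorem ae_gibqNonlinearity_apply (hT : 0 ≤ T) (j : ℕ)
    (w : Fin (j + 1) → ℝ →₁[volume] C(Set.Icc 0 T, ℂ)) :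
    ∀ᵐ ξ, ∀ t : Set.Icc 0 T, gibqNonlinearity hT j w ξ t
      = Ihat (j + 1) (fun i t' η ↦ w i η (Set.projIcc 0 T hT t')) t ξ := by
  filter_upwards [ae_duhamel_apply hT
      (convolutionProd volume C(Set.Icc 0 T, ℂ) j w),
    ae_convolutionProd_apply j w] with ξ hD hconv t
  rw [gibqNonlinearity, ContinuousLinearMap.compContinuousMultilinearMap_coe, Function.comp_apply,
    hD]
  simp only [hconv, Ihat]

end Picard

section PathIntegral

variable {X K E : Type*} [TopologicalSpace K] [CompactSpace K] [NormedAddCommGroup E]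
  [NormedSpace ℝ E] [MeasurableSpace X] {μ : Measure X}

theorem integrable_path_apply (V : X →₁[μ] C(K, E)) (t : K) : Integrable (fun ξ ↦ V ξ t) μ :=
  (ContinuousMap.evalCLM ℝ t).integrable_comp (L1.integrable_coeFn V)

/-- The functional `V ↦ ∫_A V(ξ, t) dξ` on integrable families of paths. -/
noncomputable def setIntegralPathEval (μ : Measure X) (A : Set X) (t : K) :
    (X →₁[μ] C(K, E)) →L[ℝ] E :=
  LinearMap.mkContinuous
    { toFun := fun V ↦ ∫ ξ in A, V ξ t ∂μ
      map_add' := fun V W ↦ by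
        rw [← integral_add (integrable_path_apply V t).integrableOn
          (integrable_path_apply W t).integrableOn]
        refine integral_congr_ae (ae_restrict_of_ae ?_)
        filter_upwards [Lp.coeFn_add V W] with ξ h using DFunLike.congr_fun h t
      map_smul' := fun c V ↦ by
        rw [RingHom.id_apply, ← integral_smul]
        refine integral_congr_ae (ae_restrict_of_ae ?_)
        filter_upwards [Lp.coeFn_smul c V] with ξ h using DFunLike.congr_fun h t }
    1 fun V ↦ by
      rw [one_mul, L1.norm_eq_integral_norm]
      calc ‖∫ ξ in A, V ξ t ∂μ‖ ≤ ∫ ξ in A, ‖V ξ t‖ ∂μ := norm_integral_le_integral_norm _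
        _ ≤ ∫ ξ, ‖V ξ t‖ ∂μ :=
          setIntegral_le_integral (integrable_path_apply V t).norm
            (.of_forall fun ξ ↦ norm_nonneg _)
        _ ≤ ∫ ξ, ‖V ξ‖ ∂μ :=
          integral_mono (integrable_path_apply V t).norm (L1.integrable_coeFn V).norm
            fun ξ ↦ (V ξ).norm_coe_le_norm t

theorem setIntegralPathEval_apply (A : Set X) (t : K) (V : X →₁[μ] C(K, E)) :
    setIntegralPathEval μ A t V = ∫ ξ in A, V ξ t ∂μ := rfl

theorem norm_setIntegralPathEval_le (A : Set X) (t : K) :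
    ‖(setIntegralPathEval μ A t : (X →₁[μ] C(K, E)) →L[ℝ] E)‖ ≤ 1 :=
  LinearMap.mkContinuous_norm_le _ zero_le_one _

theorem tendsto_eLpNorm_path_sub [FirstCountableTopology K] (V : X →₁[μ] C(K, E)) (t₀ : K) :
    Tendsto (fun t ↦ eLpNorm (fun ξ ↦ V ξ t - V ξ t₀) 1 μ) (nhds t₀) (nhds 0) := by
  simp only [eLpNorm_one_eq_lintegral_enorm]
  have hmeas (t : K) : AEStronglyMeasurable (fun ξ ↦ V ξ t - V ξ t₀) μ :=
    ((integrable_path_apply V t).sub (integrable_path_apply V t₀)).aestronglyMeasurable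
  have hbound : ∫⁻ ξ, 2 * ‖V ξ‖ₑ ∂μ ≠ ∞ := by
    rw [lintegral_const_mul' _ _ (by simp)]
    exact ENNReal.mul_ne_top (by simp) (L1.integrable_coeFn V).2.ne
  have hlim : Tendsto (fun t ↦ ∫⁻ ξ, ‖V ξ t - V ξ t₀‖ₑ ∂μ) (nhds t₀) (nhds (∫⁻ _, 0 ∂μ)) := by
    refine tendsto_lintegral_filter_of_dominated_convergence' (fun ξ ↦ 2 * ‖V ξ‖ₑ)
      (.of_forall fun t ↦ (hmeas t).enorm) (.of_forall fun t ↦ .of_forall fun ξ ↦ ?_) hbound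
      (.of_forall fun ξ ↦ ?_)
    · rw [two_mul]
      have hle (s : K) : ‖V ξ s‖ₑ ≤ ‖V ξ‖ₑ :=
        enorm_le_iff_norm_le.2 ((V ξ).norm_coe_le_norm s)
      exact enorm_sub_le.trans (add_le_add (hle t) (hle t₀))
    · have hcont : Continuous fun t ↦ ‖V ξ t - V ξ t₀‖ₑ := by fun_prop
      simpa using hcont.tendsto t₀
  simpa using hlim

end PathIntegral

section PathSolution

variable {T : ℝ}

theorem continuousL1On_path (hT : 0 ≤ T) (V : ℝ →₁[volume] C(Set.Icc 0 T, ℂ)) :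
    ContinuousL1On T fun t ξ ↦ V ξ (Set.projIcc 0 T hT t) := fun t₀ _ ↦
  (tendsto_eLpNorm_path_sub V _).comp (continuous_projIcc.tendsto t₀ |>.mono_left inf_le_left)

theorem isGIBqSol_of_eq_linearPath_add (hT : 0 ≤ T) {j : ℕ} {φ₀ φ₁ : ℝ →₁[volume] ℂ}
    {V : ℝ →₁[volume] C(Set.Icc 0 T, ℂ)}
    (hV : V = linearPath T φ₀ φ₁ + gibqNonlinearity hT j fun _ ↦ V) :
    IsGIBqSol (j + 1) T φ₀ φ₁ fun t ξ ↦ V ξ (Set.projIcc 0 T hT t) := by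
  refine ⟨fun t _ ↦ integrable_path_apply V _, continuousL1On_path hT V, fun t ht ↦ ?_⟩
  have hsum := Lp.coeFn_add (linearPath T φ₀ φ₁) (gibqNonlinearity hT j fun _ ↦ V)
  rw [← hV] at hsum
  filter_upwards [hsum, ae_linearPath_apply φ₀ φ₁, ae_gibqNonlinearity_apply hT j fun _ ↦ V]
    with ξ h hlin hnon
  rw [Set.projIcc_of_mem hT ht, h, Pi.add_apply, ContinuousMap.add_apply, hlin, hnon]

end PathSolution

section ConstantPath

open scoped BoundedContinuousFunction

variable {X K : Type*} [MeasurableSpace X] {μ : Measure X} [TopologicalSpace K] [CompactSpace K]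

theorem norm_algebraMap_compLp_le (f : X →₁[μ] ℝ) :
    ‖(algebraMapCLM ℝ C(K, ℂ)).compLp f‖ ≤ ‖f‖ := by
  have hnorm : ‖algebraMapCLM ℝ C(K, ℂ)‖ ≤ 1 :=
    ContinuousLinearMap.opNorm_le_bound _ zero_le_one fun x ↦
      (ContinuousMap.norm_le _ (by positivity)).2 fun t ↦ by simp
  exact ((algebraMapCLM ℝ C(K, ℂ)).norm_compLp_le f).trans
    (mul_le_of_le_one_left (norm_nonneg f) hnorm)

theorem holder_pathSymbol_one [TopologicalSpace X] [SecondCountableTopology X]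
    [OpensMeasurableSpace X] (f : X →₁[μ] ℝ) :
    pathSMulConst.holder 1 (pathSymbol μ (1 : (X × K) →ᵇ ℝ)) (Complex.ofRealCLM.compLp f)
      = (algebraMapCLM ℝ C(K, ℂ)).compLp f := by
  refine Lp.ext ?_
  filter_upwards [pathSMulConst.coeFn_holder (r := 1) (pathSymbol μ (1 : (X × K) →ᵇ ℝ))
      (Complex.ofRealCLM.compLp f), coeFn_pathSymbol (μ := μ) (1 : (X × K) →ᵇ ℝ),
    Complex.ofRealCLM.coeFn_compLp f, (algebraMapCLM ℝ C(K, ℂ)).coeFn_compLp f] with ξ h h₁ hf hA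
  rw [h, h₁, hf, hA]
  exact ContinuousMap.ext fun _ ↦ one_smul ℝ (f ξ : ℂ)

theorem convolutionProd_algebraMap {G A : Type*} [NormedRing A] [NormedAlgebra ℝ A]
    [CompleteSpace A] [MeasurableSpace G] [AddGroup G] [MeasurableAdd₂ G]
    [MeasurableNeg G] {μ : Measure G} [SFinite μ] [μ.IsAddRightInvariant] (j : ℕ)
    (w : Fin (j + 1) → G →₁[μ] ℝ) :
    convolutionProd μ A j (fun i ↦ (algebraMapCLM ℝ A).compLp (w i))
      = (algebraMapCLM ℝ A).compLp (convolutionProd μ ℝ j w) :=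
  (map_iteratedBilin (φ := (algebraMapCLM ℝ A).compLp)
    (compLp_convolutionL1 (α := algebraMapCLM ℝ A) (β := algebraMapCLM ℝ A)
      fun x y ↦ map_mul (algebraMap ℝ A) x y) j w).symm

end ConstantPath

section DuhamelConstant

variable {T : ℝ}

theorem integral_sin_mul (t a : ℝ) :
    ∫ t' in (0 : ℝ)..t, Real.sin ((t - t') * a) * a = 1 - Real.cos (t * a) := by
  rw [intervalIntegral.integral_eq_sub_of_hasDerivAt (f := fun t' ↦ Real.cos ((t - t') * a))]
  · simp
  · intro t' _
    simpa using (((hasDerivAt_id t').const_sub t).mul_const a).cos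
  · exact Continuous.intervalIntegrable (by fun_prop) _ _

theorem ae_duhamel_algebraMap_apply (hT : 0 ≤ T) (f : ℝ →₁[volume] ℝ) :
    ∀ᵐ ξ, ∀ t : Set.Icc 0 T, duhamel hT ((algebraMapCLM ℝ C(Set.Icc 0 T, ℂ)).compLp f) ξ t
      = ((1 - Real.cos (t * lam ξ)) * f ξ : ℝ) := by
  filter_upwards [ae_duhamel_apply hT ((algebraMapCLM ℝ C(Set.Icc 0 T, ℂ)).compLp f),
    (algebraMapCLM ℝ C(Set.Icc 0 T, ℂ)).coeFn_compLp f] with ξ hD hf t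
  rw [hD, hf, ← integral_sin_mul, ← intervalIntegral.integral_mul_const,
    ← intervalIntegral.integral_ofReal]
  simp only [Complex.ofReal_mul]
  rfl

end DuhamelConstant

section ConvolutionLowerBound

open scoped Convolution Pointwise

variable {G : Type*} [AddGroup G] [MeasurableSpace G] [MeasurableAdd₂ G] [MeasurableNeg G]
  {μ : Measure G} [SFinite μ] [μ.IsAddRightInvariant] {f f' g g' : G → ℝ}

theorem convolution_mul_mono_ae {x : G} (h : ConvolutionExistsAt f g x (.mul ℝ ℝ) μ)
    (h' : ConvolutionExistsAt f' g' x (.mul ℝ ℝ) μ) (hf : 0 ≤ᵐ[μ] f) (hg : 0 ≤ᵐ[μ] g)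
    (hff' : f ≤ᵐ[μ] f') (hgg' : g ≤ᵐ[μ] g') :
    (f ⋆[.mul ℝ ℝ, μ] g) x ≤ (f' ⋆[.mul ℝ ℝ, μ] g') x := by
  have hsub := quasiMeasurePreserving_sub_left_of_right_invariant μ x
  refine integral_mono_ae h h' ?_
  filter_upwards [hf, hff', hsub.ae hg, hsub.ae hgg'] with y h₁ h₂ h₃ h₄
  exact mul_le_mul h₂ h₄ h₃ (h₁.trans h₂)

theorem convolution_mul_nonneg_ae (hf : 0 ≤ᵐ[μ] f) (hg : 0 ≤ᵐ[μ] g) (x : G) :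
    0 ≤ (f ⋆[.mul ℝ ℝ, μ] g) x := by
  refine integral_nonneg_of_ae ?_
  filter_upwards [hf, (quasiMeasurePreserving_sub_left_of_right_invariant μ x).ae hg]
    with y h₁ h₂ using mul_nonneg h₁ h₂

theorem setIntegral_mul_setIntegral_le_setIntegral_convolution (hf : Integrable f μ)
    (hg : Integrable g μ) (hf₀ : 0 ≤ᵐ[μ] f) (hg₀ : 0 ≤ᵐ[μ] g) {A B C : Set G}
    (hA : MeasurableSet A) (hB : MeasurableSet B) (hC : B + A ⊆ C) :
    (∫ x in A, f x ∂μ) * ∫ x in B, g x ∂μ ≤ ∫ x in C, (f ⋆[.mul ℝ ℝ, μ] g) x ∂μ := by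
  have hsupp : ∀ x ∉ C, (A.indicator f ⋆[.mul ℝ ℝ, μ] B.indicator g) x = 0 := fun x hx ↦ by
    contrapose! hx
    exact hC (Set.add_subset_add (by simp) (by simp) (support_convolution_subset_swap _ hx))
  calc (∫ x in A, f x ∂μ) * ∫ x in B, g x ∂μ
      = (∫ x, A.indicator f x ∂μ) * ∫ x, B.indicator g x ∂μ := by
        rw [integral_indicator hA, integral_indicator hB]
    _ = ∫ x, (A.indicator f ⋆[.mul ℝ ℝ, μ] B.indicator g) x ∂μ :=
        (integral_convolution (.mul ℝ ℝ) (hf.indicator hA) (hg.indicator hB)).symm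
    _ = ∫ x in C, (A.indicator f ⋆[.mul ℝ ℝ, μ] B.indicator g) x ∂μ :=
        (setIntegral_eq_integral_of_forall_compl_eq_zero hsupp).symm
    _ ≤ ∫ x in C, (f ⋆[.mul ℝ ℝ, μ] g) x ∂μ := by
        refine integral_mono_ae
          ((hf.indicator hA).integrable_convolution _ (hg.indicator hB)).integrableOn
          (hf.integrable_convolution _ hg).integrableOn (ae_restrict_of_ae ?_)
        filter_upwards [(hf.indicator hA).ae_convolution_exists (.mul ℝ ℝ) (hg.indicator hB),
          hf.ae_convolution_exists (.mul ℝ ℝ) hg] with x h h'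
        refine convolution_mul_mono_ae h h' ?_ ?_ ?_ ?_
        · filter_upwards [hf₀] with y hy using Set.indicator_apply_nonneg fun _ ↦ hy
        · filter_upwards [hg₀] with y hy using Set.indicator_apply_nonneg fun _ ↦ hy
        · filter_upwards [hf₀] with y hy using Set.indicator_apply_le' (fun _ ↦ le_rfl) fun _ ↦ hy
        · filter_upwards [hg₀] with y hy using Set.indicator_apply_le' (fun _ ↦ le_rfl) fun _ ↦ hy

theorem convolutionProd_nonneg {j : ℕ} {w : Fin (j + 1) → G →₁[μ] ℝ} (hw : ∀ i, 0 ≤ w i) :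
    0 ≤ convolutionProd μ ℝ j w := by
  induction j with
  | zero => exact hw 0
  | succ j ih =>
    rw [convolutionProd_succ, ← Lp.coeFn_nonneg]
    refine .trans (.of_forall ?_) (coeFn_convolutionL1 (.mul ℝ ℝ) _ _).symm.le
    exact convolution_mul_nonneg_ae ((Lp.coeFn_nonneg _).2 (hw 0))
      ((Lp.coeFn_nonneg _).2 (ih fun i ↦ hw i.succ))

theorem prod_setIntegral_Icc_le_setIntegral_convolutionProd {j : ℕ}
    {w : Fin (j + 1) → ℝ →₁[volume] ℝ} (hw : ∀ i, 0 ≤ w i) (a b : Fin (j + 1) → ℝ) :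
    ∏ i, ∫ x in Set.Icc (a i) (b i), w i x
      ≤ ∫ x in Set.Icc (∑ i, a i) (∑ i, b i), convolutionProd volume ℝ j w x := by
  induction j with
  | zero => simp [convolutionProd_zero]
  | succ j ih =>
    have hw' : ∀ i, 0 ≤ Fin.tail w i := fun i ↦ hw i.succ
    rw [Fin.prod_univ_succ, Fin.sum_univ_succ a, Fin.sum_univ_succ b, convolutionProd_succ,
      setIntegral_congr_ae measurableSet_Icc
        ((coeFn_convolutionL1 (.mul ℝ ℝ) _ _).mono fun x hx _ ↦ hx)]
    refine (mul_le_mul_of_nonneg_left (ih hw' (Fin.tail a) (Fin.tail b)) ?_).trans ?_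
    · exact integral_nonneg_of_ae (ae_restrict_of_ae ((Lp.coeFn_nonneg _).2 (hw 0)))
    · refine setIntegral_mul_setIntegral_le_setIntegral_convolution (L1.integrable_coeFn _)
        (L1.integrable_coeFn _) ((Lp.coeFn_nonneg _).2 (hw 0))
        ((Lp.coeFn_nonneg _).2 (convolutionProd_nonneg hw')) measurableSet_Icc measurableSet_Icc ?_
      rw [add_comm]
      exact Set.Icc_add_Icc_subset (a 0) (b 0) (∑ i, a (Fin.succ i)) (∑ i, b (Fin.succ i))

end ConvolutionLowerBound

section Inflation

variable {T : ℝ}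

theorem linearPath_add_ofReal_sub_const (φ₀ φ₁ : ℝ →₁[volume] ℂ) (f : ℝ →₁[volume] ℝ) :
    linearPath T (φ₀ + Complex.ofRealCLM.compLp f) φ₁
        - (algebraMapCLM ℝ C(Set.Icc 0 T, ℂ)).compLp f
      = linearPath T φ₀ φ₁
        + pathSMulConst.holder 1 (pathSymbol volume (cosKernel T - 1))
          (Complex.ofRealCLM.compLp f) := by
  have hcos : pathSMulConst.holder 1 (pathSymbol volume (cosKernel T)) (Complex.ofRealCLM.compLp f)
      = pathSMulConst.holder 1 (pathSymbol volume 1) (Complex.ofRealCLM.compLp f)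
        + pathSMulConst.holder 1 (pathSymbol volume (cosKernel T - 1))
          (Complex.ofRealCLM.compLp f) := by
    rw [← ContinuousLinearMap.holder_add_left, ← pathSymbol_add, add_sub_cancel]
  rw [← holder_pathSymbol_one, linearPath, linearPath, ContinuousLinearMap.holder_add_right, hcos]
  abel

theorem norm_linearPath_add_ofReal_sub_const_le (hT : 0 ≤ T) (hT1 : T ≤ 1)
    (φ₀ φ₁ : ℝ →₁[volume] ℂ) (f : ℝ →₁[volume] ℝ) :
    ‖linearPath T (φ₀ + Complex.ofRealCLM.compLp f) φ₁
        - (algebraMapCLM ℝ C(Set.Icc 0 T, ℂ)).compLp f‖ ≤ ‖φ₀‖ + ‖φ₁‖ + T ^ 2 * ‖f‖ := by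
  have hofReal : ‖Complex.ofRealCLM.compLp f‖ ≤ ‖f‖ :=
    (Complex.ofRealCLM.norm_compLp_le f).trans (by rw [Complex.ofRealCLM_norm, one_mul])
  rw [linearPath_add_ofReal_sub_const]
  refine (norm_add_le _ _).trans (add_le_add (norm_linearPath_le hT hT1 φ₀ φ₁) ?_)
  refine (norm_pathSMulConst_pathSymbol_le _ _).trans ?_
  gcongr
  exact norm_cosKernel_sub_one_le

theorem norm_setIntegralPathEval_linearPath_le (hT : 0 ≤ T) (hT1 : T ≤ 1) (t : Set.Icc 0 T)
    {A : Set ℝ} (hA : MeasurableSet A) (φ₀ φ₁ : ℝ →₁[volume] ℂ) {f : ℝ →₁[volume] ℝ}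
    (hf : ∀ᵐ ξ, ξ ∈ A → f ξ = 0) :
    ‖setIntegralPathEval volume A t (linearPath T (φ₀ + Complex.ofRealCLM.compLp f) φ₁)‖
      ≤ ‖φ₀‖ + ‖φ₁‖ := by
  have hcongr : setIntegralPathEval volume A t (linearPath T (φ₀ + Complex.ofRealCLM.compLp f) φ₁)
      = setIntegralPathEval volume A t (linearPath T φ₀ φ₁) := by
    refine setIntegral_congr_ae hA ?_
    filter_upwards [ae_linearPath_apply (T := T) (φ₀ + Complex.ofRealCLM.compLp f) φ₁,
      ae_linearPath_apply (T := T) φ₀ φ₁, Lp.coeFn_add φ₀ (Complex.ofRealCLM.compLp f),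
      Complex.ofRealCLM.coeFn_compLp f, hf] with ξ h₁ h₂ hadd hof hfA hξ
    rw [h₁, h₂, Shat, Shat, hadd, Pi.add_apply, hof, hfA hξ, map_zero, add_zero]
  rw [hcongr]
  exact (ContinuousLinearMap.le_of_opNorm_le _ (norm_setIntegralPathEval_le A t) _).trans
    ((one_mul _).le.trans (norm_linearPath_le hT hT1 φ₀ φ₁))

theorem gibqNonlinearity_algebraMap (hT : 0 ≤ T) (j : ℕ) (f : ℝ →₁[volume] ℝ) :
    gibqNonlinearity hT j (fun _ ↦ (algebraMapCLM ℝ C(Set.Icc 0 T, ℂ)).compLp f)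
      = duhamel hT ((algebraMapCLM ℝ C(Set.Icc 0 T, ℂ)).compLp
          (convolutionProd volume ℝ j fun _ ↦ f)) := by
  rw [gibqNonlinearity, ContinuousLinearMap.compContinuousMultilinearMap_coe, Function.comp_apply,
    convolutionProd_algebraMap]

theorem sq_div_ten_mul_setIntegral_le_norm_duhamel (hT : 0 ≤ T) (hT1 : T ≤ 1) {A : Set ℝ}
    (hA : MeasurableSet A) (hA1 : A ⊆ Set.Ici 1) {g : ℝ →₁[volume] ℝ} (hg : 0 ≤ g) :
    T ^ 2 / 10 * ∫ ξ in A, g ξ ≤ ‖setIntegralPathEval volume A (⟨T, hT, le_rfl⟩ : Set.Icc 0 T)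
      (duhamel hT ((algebraMapCLM ℝ C(Set.Icc 0 T, ℂ)).compLp g))‖ := by
  have hval : setIntegralPathEval volume A (⟨T, hT, le_rfl⟩ : Set.Icc 0 T)
      (duhamel hT ((algebraMapCLM ℝ C(Set.Icc 0 T, ℂ)).compLp g))
      = ((∫ ξ in A, (1 - Real.cos (T * lam ξ)) * g ξ : ℝ) : ℂ) := by
    rw [setIntegralPathEval_apply, ← integral_complex_ofReal]
    refine integral_congr_ae (ae_restrict_of_ae ?_)
    filter_upwards [ae_duhamel_algebraMap_apply hT g] with ξ h using h _
  have hint : Integrable fun ξ ↦ (1 - Real.cos (T * lam ξ)) * g ξ :=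
    (L1.integrable_coeFn g).bdd_mul (c := 2) (by fun_prop) <| .of_forall fun ξ ↦ by
      rw [Real.norm_eq_abs, abs_le]
      constructor <;> linarith [Real.neg_one_le_cos (T * lam ξ), Real.cos_le_one (T * lam ξ)]
  rw [hval, Complex.norm_real, ← integral_const_mul]
  refine (setIntegral_mono_on_ae ((L1.integrable_coeFn g).const_mul _).integrableOn
    hint.integrableOn hA ?_).trans (le_abs_self _)
  filter_upwards [(Lp.coeFn_nonneg g).2 hg] with ξ h hξ
  exact mul_le_mul_of_nonneg_right (sq_div_ten_le_one_sub_cos hT hT1 (hA1 hξ)) h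

theorem exists_isGIBqSol_norm_setIntegral_ge {j : ℕ} (hT : 0 ≤ T) (hT1 : T ≤ 1) {R : ℝ}
    (hR : 1 ≤ R) (hTR : 200 * (j + 1) * 9 ^ j * (T ^ 2 * R ^ j) ≤ 1) {φ₀ φ₁ : ℝ →₁[volume] ℂ}
    (hφ : 40 * (j + 1) * 3 ^ j * (‖φ₀‖ + ‖φ₁‖) ≤ R) {A : Set ℝ} (hA : MeasurableSet A)
    (hA1 : A ⊆ Set.Ici 1) {f : ℝ →₁[volume] ℝ} (hf0 : 0 ≤ f) (hf : ‖f‖ ≤ 2 * R)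
    (hfA : ∀ᵐ ξ, ξ ∈ A → f ξ = 0)
    (hconv : R ^ (j + 1) ≤ ∫ ξ in A, convolutionProd volume ℝ j (fun _ ↦ f) ξ) :
    ∃ v, IsGIBqSol (j + 1) T ⇑(φ₀ + Complex.ofRealCLM.compLp f) ⇑φ₁ v ∧
      T ^ 2 * R ^ (j + 1) / 20 ≤ ‖∫ ξ in A, v T ξ‖ + (‖φ₀‖ + ‖φ₁‖) := by
  have hF : ‖(algebraMapCLM ℝ C(Set.Icc 0 T, ℂ)).compLp f‖ ≤ 2 * R :=
    (norm_algebraMap_compLp_le f).trans hf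
  have hSF : ‖linearPath T (φ₀ + Complex.ofRealCLM.compLp f) φ₁
      - (algebraMapCLM ℝ C(Set.Icc 0 T, ℂ)).compLp f‖ ≤ ‖φ₀‖ + ‖φ₁‖ + 2 * T ^ 2 * R := by
    refine (norm_linearPath_add_ofReal_sub_const_le hT hT1 φ₀ φ₁ f).trans ?_
    rw [mul_comm 2 (T ^ 2), mul_assoc]
    gcongr
  set ℓ : (ℝ →₁[volume] C(Set.Icc 0 T, ℂ)) →L[ℝ] ℂ :=
    setIntegralPathEval volume A ⟨T, hT, le_rfl⟩
  obtain ⟨V, hV, hlow⟩ := exists_eq_add_multilinear_diag_norm_clm_ge (gibqNonlinearity hT j) ℓ hR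
    (norm_gibqNonlinearity_le hT j) (norm_setIntegralPathEval_le A _) hF hSF hφ hTR
  refine ⟨_, isGIBqSol_of_eq_linearPath_add hT hV, ?_⟩
  have hlin : ‖ℓ (linearPath T (φ₀ + Complex.ofRealCLM.compLp f) φ₁)‖ ≤ ‖φ₀‖ + ‖φ₁‖ :=
    norm_setIntegralPathEval_linearPath_le hT hT1 _ hA φ₀ φ₁ hfA
  have hpicard := sq_div_ten_mul_setIntegral_le_norm_duhamel hT hT1 hA hA1
    (convolutionProd_nonneg (j := j) fun _ ↦ hf0)
  rw [← gibqNonlinearity_algebraMap] at hpicard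
  have hmain : T ^ 2 / 10 * R ^ (j + 1)
      ≤ T ^ 2 / 10 * ∫ ξ in A, convolutionProd volume ℝ j (fun _ ↦ f) ξ := by gcongr
  have hV_eval : ℓ V = ∫ ξ in A, V ξ (Set.projIcc 0 T hT T) := by
    rw [Set.projIcc_right]
    rfl
  rw [← hV_eval]
  linarith

end Inflation

section FourierLebesgue

variable {s : ℝ} {p : ℝ≥0∞}

theorem jbw_pos (s ξ : ℝ) : 0 < jbw s ξ := Real.rpow_pos_of_pos (by positivity) _

theorem continuous_jbw (s : ℝ) : Continuous (jbw s) :=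
  Continuous.rpow_const (by fun_prop) fun ξ ↦ .inl (by positivity)

theorem exists_forall_le_abs_jbw_le (hs : s < 0) {c : ℝ} (hc : 0 < c) :
    ∃ N, ∀ ξ, N ≤ |ξ| → jbw s ξ ≤ c := by
  have hlim : Tendsto (fun x : ℝ ↦ x ^ (s / 2)) atTop (nhds 0) := by
    simpa using tendsto_rpow_neg_atTop (y := -(s / 2)) (by linarith)
  obtain ⟨N, hN⟩ := eventually_atTop.1 (hlim.eventually_le_const hc)
  exact ⟨N, fun ξ hξ ↦ hN _ (by nlinarith [sq_abs ξ, sq_nonneg (|ξ| - 1)])⟩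

theorem FLnorm_eq_eLpNorm (s : ℝ) (p : ℝ≥0∞) (w : ℝ → ℂ) :
    FLnorm s p w = eLpNorm (fun ξ ↦ jbw s ξ • w ξ) p volume :=
  eLpNorm_congr_norm_ae (.of_forall fun ξ ↦ by simp)

theorem FLnorm_congr_ae {w w' : ℝ → ℂ} (h : w =ᵐ[volume] w') : FLnorm s p w = FLnorm s p w' :=
  eLpNorm_congr_ae (by filter_upwards [h] with ξ hξ; rw [hξ])

theorem FLnorm_add_le (hp : 1 ≤ p) {w w' : ℝ → ℂ} (hw : AEStronglyMeasurable w)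
    (hw' : AEStronglyMeasurable w') :
    FLnorm s p (fun ξ ↦ w ξ + w' ξ) ≤ FLnorm s p w + FLnorm s p w' := by
  simp only [FLnorm_eq_eLpNorm, smul_add]
  exact eLpNorm_add_le ((continuous_jbw s).aestronglyMeasurable.smul hw)
    ((continuous_jbw s).aestronglyMeasurable.smul hw') hp

theorem FLnorm_L1_add_sub_le (hp : 1 ≤ p) {w : ℝ → ℂ} (hw : AEStronglyMeasurable w)
    (φ ψ : ℝ →₁[volume] ℂ) :
    FLnorm s p (fun ξ ↦ (φ + ψ : ℝ →₁[volume] ℂ) ξ - w ξ)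
      ≤ FLnorm s p (fun ξ ↦ φ ξ - w ξ) + FLnorm s p ψ := by
  refine le_of_eq_of_le (FLnorm_congr_ae ?_) (FLnorm_add_le hp
    ((Lp.aestronglyMeasurable φ).sub hw) (Lp.aestronglyMeasurable ψ))
  filter_upwards [Lp.coeFn_add φ ψ] with ξ hξ
  rw [hξ, Pi.add_apply, add_sub_right_comm]

theorem FLnorm_indicator_const_le {A : Set ℝ} {c : ℝ} (hA : ∀ ξ ∈ A, jbw s ξ ≤ c) (z : ℂ) :
    FLnorm s p (A.indicator fun _ ↦ z) ≤ ‖c * ‖z‖‖ₑ * volume A ^ (1 / p.toReal) := by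
  refine le_trans (eLpNorm_mono_real fun ξ ↦ ?_) (eLpNorm_indicator_const_le (c * ‖z‖) p)
  by_cases hξ : ξ ∈ A
  · rw [Set.indicator_of_mem hξ, Set.indicator_of_mem hξ, norm_mul, norm_norm,
      Real.norm_of_nonneg (jbw_pos s ξ).le]
    gcongr
    exact hA ξ hξ
  · simp [hξ]

theorem exists_FLnorm_L1_sub_le (hp : p ≠ ∞) {w : ℝ → ℂ} (hw : AEStronglyMeasurable w)
    (hwp : FLnorm s p w < ∞) {δ : ℝ≥0∞} (hδ : δ ≠ 0) :
    ∃ φ : ℝ →₁[volume] ℂ, FLnorm s p (fun ξ ↦ φ ξ - w ξ) ≤ δ := by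
  have hmem : MemLp (fun ξ ↦ jbw s ξ • w ξ) p volume :=
    ⟨(continuous_jbw s).aestronglyMeasurable.smul hw, by rwa [← FLnorm_eq_eLpNorm]⟩
  obtain ⟨g, hg_supp, hg, hg_cont, -⟩ := hmem.exists_hasCompactSupport_eLpNorm_sub_le hp hδ
  have hφ : Integrable fun ξ ↦ (jbw s ξ)⁻¹ • g ξ :=
    (((continuous_jbw s).inv₀ fun ξ ↦ (jbw_pos s ξ).ne').smul hg_cont
      ).integrable_of_hasCompactSupport hg_supp.smul_left
  refine ⟨hφ.toL1 _, le_trans (le_of_eq ?_) hg⟩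
  rw [FLnorm_eq_eLpNorm, eLpNorm_sub_comm]
  refine eLpNorm_congr_ae ?_
  filter_upwards [hφ.coeFn_toL1] with ξ hξ
  rw [hξ, smul_sub, smul_inv_smul₀ (jbw_pos s ξ).ne', Pi.sub_apply]

theorem exists_enorm_setIntegral_le_FLnorm (s : ℝ) (hp : 1 ≤ p) {A : Set ℝ} (hA : IsCompact A) :
    ∃ C : NNReal, ∀ w : ℝ → ℂ, AEStronglyMeasurable w →
      ‖∫ ξ in A, w ξ‖ₑ ≤ C * FLnorm s p w := by
  obtain ⟨c, hc⟩ := hA.exists_bound_of_continuousOn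
    ((continuous_jbw s).inv₀ fun ξ ↦ (jbw_pos s ξ).ne').continuousOn
  set θ : ℝ := 1 / (1 : ℝ≥0∞).toReal - 1 / p.toReal
  have hθ : volume A ^ θ ≠ ∞ := by
    refine ENNReal.rpow_ne_top_of_nonneg ?_ hA.measure_lt_top.ne
    simp only [θ, one_div, ← ENNReal.toReal_inv, sub_nonneg]
    exact ENNReal.toReal_mono (by simp) (ENNReal.inv_le_inv' hp)
  refine ⟨c.toNNReal * (volume A ^ θ).toNNReal, fun w hw ↦ ?_⟩
  have hwA : eLpNorm w p (volume.restrict A) ≤ ENNReal.ofReal c * FLnorm s p w := by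
    refine (eLpNorm_le_mul_eLpNorm_of_ae_le_mul ?_ p).trans
      (mul_right_mono (eLpNorm_restrict_le _ p volume A))
    filter_upwards [ae_restrict_mem hA.measurableSet] with ξ hξ
    have hcξ : (jbw s ξ)⁻¹ ≤ c := by
      simpa [abs_of_pos (jbw_pos s ξ)] using hc ξ hξ
    rw [norm_mul, norm_norm, Real.norm_of_nonneg (jbw_pos s ξ).le, ← mul_assoc]
    exact le_mul_of_one_le_left (norm_nonneg _) ((inv_le_iff_one_le_mul₀ (jbw_pos s ξ)).1 hcξ)
  calc ‖∫ ξ in A, w ξ‖ₑ ≤ ∫⁻ ξ in A, ‖w ξ‖ₑ := enorm_integral_le_lintegral_enorm _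
    _ = eLpNorm w 1 (volume.restrict A) := eLpNorm_one_eq_lintegral_enorm.symm
    _ ≤ eLpNorm w p (volume.restrict A) * volume.restrict A Set.univ ^ θ :=
        eLpNorm_le_eLpNorm_mul_rpow_measure_univ hp hw.restrict
    _ ≤ ENNReal.ofReal c * FLnorm s p w * volume A ^ θ := by
        rw [Measure.restrict_apply_univ]
        gcongr
    _ = (c.toNNReal * (volume A ^ θ).toNNReal : NNReal) * FLnorm s p w := by
        rw [ENNReal.coe_mul, ENNReal.coe_toNNReal hθ, ENNReal.ofReal, mul_right_comm]

end FourierLebesgue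

section ResonantBump

/-- The frequency support of the inflating perturbation: `j` frequencies near `N` resonate with one
near `-j N` to produce a frequency in `[1, j + 2]`. -/
def resonantSet (j : ℕ) (N : ℝ) : Set ℝ :=
  Set.Icc (1 - j * N) (2 - j * N) ∪ Set.Icc N (N + 1)

variable {j : ℕ} {N : ℝ}

theorem measurableSet_resonantSet (j : ℕ) (N : ℝ) : MeasurableSet (resonantSet j N) :=
  measurableSet_Icc.union measurableSet_Icc

theorem volume_resonantSet_le (j : ℕ) (N : ℝ) : volume (resonantSet j N) ≤ 2 := by
  refine (measure_union_le _ _).trans (le_of_eq ?_)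
  rw [Real.volume_Icc, Real.volume_Icc, ← ENNReal.ofReal_add (by linarith) (by linarith)]
  norm_num

theorem volume_resonantSet_ne_top (j : ℕ) (N : ℝ) : volume (resonantSet j N) ≠ ∞ :=
  ((volume_resonantSet_le j N).trans_lt ENNReal.ofNat_lt_top).ne

theorem le_abs_of_mem_resonantSet (hj : 1 ≤ j) (hN : 0 ≤ N) {ξ : ℝ} (hξ : ξ ∈ resonantSet j N) :
    N - 2 ≤ |ξ| := by
  have hjN : N ≤ j * N := le_mul_of_one_le_left hN (mod_cast hj)
  rcases hξ with hξ | hξ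
  · linarith [hξ.2, neg_le_abs ξ]
  · linarith [hξ.1, le_abs_self ξ]

theorem disjoint_Icc_resonantSet (hj : 1 ≤ j) (hN : j + 2 < N) :
    Disjoint (Set.Icc 1 (j + 2 : ℝ)) (resonantSet j N) := by
  have hj' : (1 : ℝ) ≤ j := mod_cast hj
  refine Set.disjoint_left.2 fun ξ hξ hmem ↦ ?_
  rcases hmem with h | h
  · nlinarith [hξ.1, h.2]
  · linarith [hξ.2, h.1]

/-- `R` times the indicator function of `resonantSet j N`, as an element of `L¹`. -/
noncomputable def resonantBump (j : ℕ) (N R : ℝ) : ℝ →₁[volume] ℝ :=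
  indicatorConstLp 1 (measurableSet_resonantSet j N) (volume_resonantSet_ne_top j N) R

variable {R : ℝ}

theorem coeFn_resonantBump (j : ℕ) (N R : ℝ) :
    resonantBump j N R =ᵐ[volume] (resonantSet j N).indicator fun _ ↦ R :=
  indicatorConstLp_coeFn

theorem resonantBump_nonneg (hR : 0 ≤ R) : 0 ≤ resonantBump j N R := by
  rw [← Lp.coeFn_nonneg]
  filter_upwards [coeFn_resonantBump j N R] with ξ hξ
  rw [hξ]
  exact Set.indicator_nonneg (fun _ _ ↦ hR) ξ

theorem norm_resonantBump_le (hR : 0 ≤ R) : ‖resonantBump j N R‖ ≤ 2 * R := by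
  rw [resonantBump, norm_indicatorConstLp one_ne_zero ENNReal.one_ne_top, Real.norm_of_nonneg hR,
    ENNReal.toReal_one, div_one, Real.rpow_one, mul_comm]
  gcongr
  exact ENNReal.toReal_mono ENNReal.ofNat_ne_top (volume_resonantSet_le j N)

theorem setIntegral_Icc_resonantBump {a b : ℝ} (hab : a ≤ b)
    (hsub : Set.Icc a b ⊆ resonantSet j N) :
    ∫ ξ in Set.Icc a b, resonantBump j N R ξ = (b - a) * R := by
  rw [resonantBump, setIntegral_indicatorConstLp measurableSet_Icc,
    Set.inter_eq_self_of_subset_right hsub, Real.volume_real_Icc_of_le hab, smul_eq_mul]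

theorem pow_le_setIntegral_convolutionProd_resonantBump (hR : 0 ≤ R) :
    R ^ (j + 1) ≤ ∫ ξ in Set.Icc 1 (j + 2 : ℝ),
      convolutionProd volume ℝ j (fun _ ↦ resonantBump j N R) ξ := by
  have hprod := prod_setIntegral_Icc_le_setIntegral_convolutionProd
    (w := fun _ : Fin (j + 1) ↦ resonantBump j N R) (fun _ ↦ resonantBump_nonneg hR)
    (Fin.cons (1 - j * N) fun _ ↦ N) (Fin.cons (2 - j * N) fun _ ↦ N + 1)
  have hleft : 1 - j * N + j * N = 1 := by ring
  have hright : 2 - j * N + j * (N + 1) = j + 2 := by ring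
  simp only [Fin.prod_univ_succ, Fin.sum_univ_succ, Fin.cons_zero, Fin.cons_succ, Fin.sum_const,
    Fin.prod_const, nsmul_eq_mul, hleft, hright] at hprod
  rw [setIntegral_Icc_resonantBump (by linarith) Set.subset_union_left,
    setIntegral_Icc_resonantBump (by linarith) Set.subset_union_right] at hprod
  calc R ^ (j + 1) = (2 - j * N - (1 - j * N)) * R * ((N + 1 - N) * R) ^ j := by ring
    _ ≤ _ := hprod

theorem FLnorm_resonantBump_le {s c : ℝ} {p : ℝ≥0∞} (hp : 1 ≤ p) (hR : 0 ≤ R)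
    (hc : ∀ ξ ∈ resonantSet j N, jbw s ξ ≤ c) :
    FLnorm s p (Complex.ofRealCLM.compLp (resonantBump j N R)) ≤ ENNReal.ofReal (2 * c * R) := by
  have hc0 : 0 ≤ c := (jbw_pos s N).le.trans (hc N (.inr ⟨le_rfl, by linarith⟩))
  have hind : Complex.ofRealCLM.compLp (resonantBump j N R)
      =ᵐ[volume] (resonantSet j N).indicator fun _ ↦ (R : ℂ) := by
    filter_upwards [Complex.ofRealCLM.coeFn_compLp (resonantBump j N R), coeFn_resonantBump j N R]
      with ξ h₁ h₂
    rw [h₁, h₂]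
    exact congrFun (Set.comp_indicator_const R _ (map_zero Complex.ofRealCLM)) ξ
  rw [FLnorm_congr_ae hind]
  refine (FLnorm_indicator_const_le hc _).trans ?_
  have hvol : volume (resonantSet j N) ^ (1 / p.toReal) ≤ 2 := by
    refine (ENNReal.rpow_le_rpow (volume_resonantSet_le j N) (by positivity)).trans ?_
    refine (ENNReal.rpow_le_rpow_of_exponent_le one_le_two (?_ : 1 / p.toReal ≤ 1)).trans_eq
      (ENNReal.rpow_one 2)
    rw [one_div, ← ENNReal.toReal_inv]
    exact ENNReal.toReal_mono ENNReal.one_ne_top (ENNReal.inv_le_one.2 hp)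
  rw [Complex.norm_real, Real.norm_of_nonneg hR, Real.enorm_of_nonneg (by positivity), mul_assoc,
    ENNReal.ofReal_mul zero_le_two, ENNReal.ofReal_ofNat, mul_comm 2]
  gcongr

theorem exists_FLnorm_resonantBump_le {s : ℝ} (hs : s < 0) {p : ℝ≥0∞} (hp : 1 ≤ p) (hj : 1 ≤ j)
    (hR : 0 < R) {δ : ℝ} (hδ : 0 < δ) :
    ∃ N : ℝ, j + 2 < N ∧
      FLnorm s p (Complex.ofRealCLM.compLp (resonantBump j N R)) ≤ ENNReal.ofReal δ := by
  obtain ⟨N₀, hN₀⟩ := exists_forall_le_abs_jbw_le hs (c := δ / (2 * R)) (by positivity)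
  refine ⟨max (N₀ + 2) (j + 3), lt_max_of_lt_right (by linarith), ?_⟩
  refine (FLnorm_resonantBump_le hp hR.le (fun ξ hξ ↦ hN₀ ξ ?_)).trans
    (ENNReal.ofReal_le_ofReal (le_of_eq (by field_simp)))
  have := le_abs_of_mem_resonantSet hj (le_max_of_le_right (by positivity)) hξ
  linarith [le_max_left (N₀ + 2) (j + 3 : ℝ)]

theorem exists_sq_mul_pow_le_lt_sq_mul_pow_succ (hj : j ≠ 0) {K ρ : ℝ} (hK : 0 < K) (hρ : 0 < ρ)
    (M B : ℝ) :
    ∃ T R : ℝ, 0 < T ∧ T < ρ ∧ 1 ≤ R ∧ M ≤ R ∧ K * (T ^ 2 * R ^ j) ≤ 1 ∧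
      B < T ^ 2 * R ^ (j + 1) := by
  have hlim : Tendsto (fun R : ℝ ↦ Real.sqrt ((K * R ^ j)⁻¹)) atTop (nhds 0) := by
    rw [← Real.sqrt_zero]
    exact (tendsto_inv_atTop_zero.comp ((tendsto_pow_atTop hj).const_mul_atTop hK)).sqrt
  obtain ⟨R, hTρ, hR1, hMR, hBR⟩ := ((hlim.eventually_lt_const hρ).and <|
    (eventually_ge_atTop 1).and <| (eventually_ge_atTop M).and <|
      eventually_gt_atTop (B * K)).exists
  have : 0 < R := by linarith
  have hT2 : Real.sqrt ((K * R ^ j)⁻¹) ^ 2 = (K * R ^ j)⁻¹ := Real.sq_sqrt (by positivity)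
  refine ⟨_, R, Real.sqrt_pos.2 (by positivity), hTρ, hR1, hMR, ?_, ?_⟩
  · rw [hT2]
    field_simp
    rfl
  · rw [hT2, pow_succ]
    field_simp
    linarith

theorem exists_L1_isGIBqSol_norm_setIntegral_gt {s : ℝ} (hs : s < 0) {p : ℝ≥0∞} (hp : 1 ≤ p)
    (hj : 1 ≤ j) (φ₀ φ₁ : ℝ →₁[volume] ℂ) {ρ δ : ℝ} (hρ : 0 < ρ) (hδ : 0 < δ) (B : ℝ) :
    ∃ T ∈ Set.Ioo 0 ρ, ∃ φ : ℝ →₁[volume] ℂ, FLnorm s p φ ≤ ENNReal.ofReal δ ∧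
      ∃ v, IsGIBqSol (j + 1) T ⇑(φ₀ + φ) ⇑φ₁ v ∧ B < ‖∫ ξ in Set.Icc 1 (j + 2 : ℝ), v T ξ‖ := by
  obtain ⟨T, R, hT, hTρ, hR1, hMR, hTR, hBR⟩ := exists_sq_mul_pow_le_lt_sq_mul_pow_succ
    (Nat.one_le_iff_ne_zero.1 hj) (K := 200 * (j + 1) * 9 ^ j) (by positivity) (lt_min hρ one_pos)
    (40 * (j + 1) * 3 ^ j * (‖φ₀‖ + ‖φ₁‖)) (20 * (B + (‖φ₀‖ + ‖φ₁‖)))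
  have hR : 0 < R := by linarith
  obtain ⟨N, hN, hbump⟩ := exists_FLnorm_resonantBump_le hs hp hj hR hδ
  have hzero : ∀ᵐ ξ, ξ ∈ Set.Icc 1 (j + 2 : ℝ) → resonantBump j N R ξ = 0 := by
    filter_upwards [coeFn_resonantBump j N R] with ξ h hξ
    rw [h, Set.indicator_of_notMem ((disjoint_Icc_resonantSet hj hN).notMem_of_mem_left hξ)]
  obtain ⟨v, hv, hlow⟩ := exists_isGIBqSol_norm_setIntegral_ge hT.le
    (hTρ.trans_le (min_le_right _ _)).le hR1 hTR hMR measurableSet_Icc Set.Icc_subset_Ici_self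
    (resonantBump_nonneg hR.le) (norm_resonantBump_le hR.le) hzero
    (pow_le_setIntegral_convolutionProd_resonantBump hR.le)
  exact ⟨T, ⟨hT, hTρ.trans_le (min_le_left _ _)⟩, _, hbump, v, hv, by linarith⟩

end ResonantBump

theorem norm_inflation_infinite_loss_of_regularity_Hs_general
    {k : ℕ} (hk : 2 ≤ k) (σ : ℝ) {s : ℝ} (hs : s < 0) {p q : ℝ≥0∞} (hp : 1 ≤ p) (hp' : p ≠ ∞)
    (hq : 1 ≤ q) {v₀ v₁ : ℝ → ℂ} (hv₀m : AEStronglyMeasurable v₀) (hv₁m : AEStronglyMeasurable v₁)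
    (hv₀ : FLnorm s p v₀ < ∞) (hv₁ : FLnorm s p v₁ < ∞) {ε : ℝ} (hε : 0 < ε) :
    ∃ T ∈ Set.Ioo 0 ε, ∃ w₀ w₁ : ℝ → ℂ, Integrable w₀ ∧ Integrable w₁ ∧
      ∃ v, IsGIBqSol k T w₀ w₁ v ∧
        FLnorm s p (fun ξ ↦ w₀ ξ - v₀ ξ) + FLnorm s p (fun ξ ↦ w₁ ξ - v₁ ξ) < ENNReal.ofReal ε ∧
        ENNReal.ofReal ε⁻¹ < FLnorm σ q (v T) := by
  obtain ⟨j, rfl⟩ := Nat.exists_eq_add_of_le' (one_le_two.trans hk)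
  have hj : 1 ≤ j := Nat.le_of_succ_le_succ hk
  have hε4 : 0 < ε / 4 := by positivity
  obtain ⟨φ₀, hφ₀⟩ := exists_FLnorm_L1_sub_le hp' hv₀m hv₀ (ENNReal.ofReal_pos.2 hε4).ne'
  obtain ⟨φ₁, hφ₁⟩ := exists_FLnorm_L1_sub_le hp' hv₁m hv₁ (ENNReal.ofReal_pos.2 hε4).ne'
  obtain ⟨C, hC⟩ :=
    exists_enorm_setIntegral_le_FLnorm σ hq (isCompact_Icc (a := 1) (b := (j + 2 : ℝ)))
  obtain ⟨T, hT, φ, hφ, v, hv, hlarge⟩ :=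
    exists_L1_isGIBqSol_norm_setIntegral_gt hs hp hj φ₀ φ₁ hε hε4 (C * ε⁻¹)
  refine ⟨T, hT, ⇑(φ₀ + φ), φ₁, L1.integrable_coeFn _, L1.integrable_coeFn _, v, hv, ?_, ?_⟩
  · calc _ ≤ ENNReal.ofReal (ε / 4) + ENNReal.ofReal (ε / 4) + ENNReal.ofReal (ε / 4) :=
          add_le_add ((FLnorm_L1_add_sub_le hp hv₀m φ₀ φ).trans (add_le_add hφ₀ hφ)) hφ₁
      _ = ENNReal.ofReal (3 / 4 * ε) := by
          rw [← ENNReal.ofReal_add hε4.le hε4.le, ← ENNReal.ofReal_add (by positivity) hε4.le]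
          ring_nf
      _ < ENNReal.ofReal ε := (ENNReal.ofReal_lt_ofReal_iff hε).2 (by linarith)
  · have hvT : Integrable (v T) := hv.1 T ⟨hT.1.le, le_rfl⟩
    refine lt_of_not_ge fun hle ↦ hlarge.not_ge ?_
    rw [← ENNReal.ofReal_le_ofReal_iff (by positivity), ofReal_norm,
      ENNReal.ofReal_mul C.coe_nonneg, ENNReal.ofReal_coe_nnreal]
    exact (hC (v T) hvT.aestronglyMeasurable).trans (by gcongr)

/-- Norm inflation with infinite loss of regularity at general initial data in `H^s`
for the generalized improved Boussinesq equation. -/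
theorem norm_inflation_infinite_loss_of_regularity_Hs
    (k : ℕ) (hk : 2 ≤ k) (σ s : ℝ) (hs : s < 0)
    (v₀ v₁ : ℝ → ℂ) (hv₀m : Measurable v₀) (hv₁m : Measurable v₁)
    (hv₀ : FLnorm s 2 v₀ < ⊤) (hv₁ : FLnorm s 2 v₁ < ⊤) :
    ∀ ε : ℝ, 0 < ε →
      ∃ T : ℝ, T ∈ Set.Ioo 0 ε ∧
        ∃ w₀ w₁ : ℝ → ℂ, Integrable w₀ ∧ Integrable w₁ ∧
          ∃ v : ℝ → ℝ → ℂ, IsGIBqSol k T w₀ w₁ v ∧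
            FLnorm s 2 (fun ξ => w₀ ξ - v₀ ξ) + FLnorm s 2 (fun ξ => w₁ ξ - v₁ ξ)
                < ENNReal.ofReal ε ∧
            ENNReal.ofReal ε⁻¹ < FLnorm σ 2 (v T) := fun _ hε ↦
  norm_inflation_infinite_loss_of_regularity_Hs_general hk σ hs one_le_two ENNReal.ofNat_ne_top
    one_le_two hv₀m.aestronglyMeasurable hv₁m.aestronglyMeasurable hv₀ hv₁ hε
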